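/- Let d ≥ 1, D := {1,...,d} and let B ⊆ D be nonempty. If f : I^d → ℝ is measurable with ∫_{I^d} |f| log^{|B|-1}(1+|f|) < ∞, then (L_{n_B}∘R_{n_{B'}})(f) → f in Lebesgue measure on I^d as min_{j∈D} n_j → ∞; that is, for every ε > 0, mes{x ∈ I^d : |(L_{n_B}∘R_{n_{B'}})(f;x) − f(x)| > ε} → 0. -/

import Mathlib

open MeasureTheory Filter

noncomputable section

/-- The unit cube `[0,1)^d`. -/
def unitCube (d : ℕ) : Set (Fin d → ℝ) := Set.univ.pi fun _ => Set.Ico (0:ℝ) 1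

/-- Lebesgue measure restricted to the unit cube `[0,1)^d`. -/
def cubeMeasure (d : ℕ) : Measure (Fin d → ℝ) := volume.restrict (unitCube d)

/-- The `1`-periodic function equal to `1` on `[0,1/2)` and to `-1` on `[1/2,1)`. -/
def r0 (x : ℝ) : ℝ := if Int.fract x < 1/2 then 1 else -1

/-- The Rademacher functions. -/
def rademacher (n : ℕ) (x : ℝ) : ℝ := r0 (2 ^ n * x)

/-- The Walsh functions (in Paley enumeration, via binary digits). -/
def walsh (n : ℕ) (x : ℝ) : ℝ :=
  ∏ k ∈ Finset.range (n + 1), if n.testBit k then rademacher k x else 1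

/-- The Walsh–Dirichlet kernel `D_n`. -/
def dirichletKernel (n : ℕ) (x : ℝ) : ℝ := ∑ k ∈ Finset.range n, walsh k x

/-- `l_n = ∑_{k=1}^{n-1} 1/k`. -/
def logSum (n : ℕ) : ℝ := ∑ k ∈ Finset.Icc 1 (n - 1), (1 : ℝ) / k

/-- The Nörlund logarithmic kernel `F_n`. -/
def FKernel (n : ℕ) (u : ℝ) : ℝ :=
  (1 / logSum n) * ∑ i ∈ Finset.Ico 1 n, dirichletKernel (n - i) u / i

/-- The Riesz logarithmic kernel `G_n`. -/
def GKernel (n : ℕ) (u : ℝ) : ℝ :=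
  (1 / logSum n) * ∑ i ∈ Finset.Ico 1 n, dirichletKernel i u / i

/-- Walsh–Fourier coefficient of `f` on the unit cube. -/
def walshCoef {d : ℕ} (f : (Fin d → ℝ) → ℝ) (j : Fin d → ℕ) : ℝ :=
  ∫ x, f x * ∏ i, walsh (j i) (x i) ∂(cubeMeasure d)

/-- Rectangular partial sums of the multiple Walsh–Fourier series. -/
def rectPartialSum {d : ℕ} (f : (Fin d → ℝ) → ℝ) (N : Fin d → ℕ) (x : Fin d → ℝ) : ℝ :=
  ∑ j ∈ Fintype.piFinset (fun i => Finset.range (N i)),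
    walshCoef f j * ∏ i, walsh (j i) (x i)

/-- The mixed logarithmic means `(L_{n_B} ∘ R_{n_{B'}})(f)`. -/
def mixedLogMean {d : ℕ} (B : Finset (Fin d)) (f : (Fin d → ℝ) → ℝ)
    (n : Fin d → ℕ) (x : Fin d → ℝ) : ℝ :=
  (∏ j, logSum (n j))⁻¹ *
    ∑ i ∈ Fintype.piFinset (fun j => Finset.Ico 1 (n j)),
      rectPartialSum f (fun j => if j ∈ B then n j - i j else i j) x / ∏ j, (i j : ℝ)

/-- A Young function: convex, continuous, even, vanishing at `0`, with
`Q(u)/u → ∞` at `+∞` and `Q(u)/u → 0` at `0`. -/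
structure YoungFunction where
  toFun : ℝ → ℝ
  nonneg : ∀ u, 0 ≤ toFun u
  convexOn : ConvexOn ℝ Set.univ toFun
  continuous : Continuous toFun
  even : ∀ u, toFun (-u) = toFun u
  map_zero : toFun 0 = 0
  tendsto_atTop : Tendsto (fun u => toFun u / u) atTop atTop
  tendsto_zero : Tendsto (fun u => toFun u / u) (nhdsWithin 0 {(0:ℝ)}ᶜ) (nhds 0)

/-- The set of admissible constants `k` in the Luxemburg norm of `f`. -/
def orliczSet {d : ℕ} (Q : YoungFunction) (f : (Fin d → ℝ) → ℝ) : Set ℝ :=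
  {k | 0 < k ∧ Integrable (fun x => Q.toFun (|f x| / k)) (cubeMeasure d) ∧
    ∫ x, Q.toFun (|f x| / k) ∂(cubeMeasure d) ≤ 1}

/-- `f` belongs to the Orlicz space `L_Q(I^d)`. -/
def MemOrlicz {d : ℕ} (Q : YoungFunction) (f : (Fin d → ℝ) → ℝ) : Prop :=
  Measurable f ∧ (orliczSet Q f).Nonempty

/-- The Luxemburg norm on the Orlicz space `L_Q(I^d)`. -/
def orliczNorm {d : ℕ} (Q : YoungFunction) (f : (Fin d → ℝ) → ℝ) : ℝ :=
  sInf (orliczSet Q f)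

/-- `p_n = 2^{2n} + 2^{2n-2} + ⋯ + 2^0`. -/
def pIdx (n : ℕ) : ℕ := ∑ k ∈ Finset.range (n + 1), 4 ^ k

/-- `m̃ = ⌊ l_{p_{⌊m/2⌋}-1}/16 - 2^15 ⌋`. -/
def mTilde (m : ℕ) : ℤ := ⌊logSum (pIdx (m / 2) - 1) / 16 - 2 ^ 15⌋

/-- `m₀ = min{m : m̃ > 1}`. -/
def m₀ : ℕ := sInf {m : ℕ | 1 < mTilde m}

/-- The set `Ω_n`. -/
def Omega (n : ℕ) : Set ℝ :=
  ⋃ m ∈ Finset.Icc n (2 * n),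
    Set.Ico ((2:ℝ) ^ (-(m:ℤ) - 1) + (2:ℝ) ^ (-(m:ℤ) - mTilde m)) ((2:ℝ) ^ (-(m:ℤ)))

/-- `k`-th binary digit of `x` (the expansion not terminating in `1`'s). -/
def binDigit (k : ℕ) (x : ℝ) : ℕ := (⌊x * 2 ^ (k + 1)⌋).toNat % 2

/-- Dyadic addition on `[0,1)`. -/
def dyadicAdd (x t : ℝ) : ℝ :=
  ∑' k : ℕ, |(binDigit k x : ℝ) - (binDigit k t : ℝ)| / 2 ^ (k + 1)

/-- Dyadic convolution `f ∗ K` on `[0,1)`. -/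
def dyadicConv (f K : ℝ → ℝ) (x : ℝ) : ℝ :=
  ∫ t in Set.Ico (0:ℝ) 1, f t * K (dyadicAdd x t)

/-- Lebesgue measure restricted to `[0,1)`. -/
def unitMeasure : Measure ℝ := volume.restrict (Set.Ico (0:ℝ) 1)

/-- A set `A ⊆ L_Q(I^d)` is nowhere dense w.r.t. the Luxemburg norm. -/
def OrliczNowhereDense {d : ℕ} (Q : YoungFunction) (A : Set ((Fin d → ℝ) → ℝ)) : Prop :=
  ∀ f, MemOrlicz Q f → ∀ ε > 0, ∃ g, MemOrlicz Q g ∧ ∃ δ > 0,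
    (∀ h, MemOrlicz Q h → orliczNorm Q (h - g) < δ → orliczNorm Q (h - f) < ε) ∧
    (∀ h, MemOrlicz Q h → orliczNorm Q (h - g) < δ → h ∉ A)

/-- A set `A ⊆ L_Q(I^d)` is of first Baire category (meager) w.r.t. the Luxemburg norm. -/
def OrliczMeager {d : ℕ} (Q : YoungFunction) (A : Set ((Fin d → ℝ) → ℝ)) : Prop :=
  ∃ F : ℕ → Set ((Fin d → ℝ) → ℝ), (∀ k, OrliczNowhereDense Q (F k)) ∧ A ⊆ ⋃ k, F k

/-!
At a fixed dyadic resolution all the means are convolution operators on a finite group of sign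
vectors, acting separately in each coordinate. Modulated by a Walsh function, a Dirichlet kernel
becomes a martingale transform, so by Burkholder's inequality partial sums, and with them all
logarithmic means, are bounded on `L^p` with constant `O(p)`. The Riesz logarithmic kernels are
bounded in `L^1`. The Nörlund logarithmic kernels are, up to an error bounded in `L^1`, modulated
martingale transforms as well, hence of weak type `(1, 1)` uniformly in `n`.

Fix one index of `B`, use the weak type bound in that direction and dualize the others: they map
bounded functions to functions whose moments of order `2r` are at most `(C r ^ (#B - 1)) ^ (2r)`.
By a Young type inequality such functions pair with `L log^{#B - 1} L`, so the means of the part of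
`f` where `|f| > M` are small in measure, uniformly in `n`, once `M` is large. The bounded remainder
is approximated in `L^2` by a dyadic step function, on which the means converge because the Walsh
functions are their eigenfunctions, with eigenvalues tending to `1`.
-/

namespace WalshLogMean

open Finset
open scoped BigOperators

/-! ### Walsh products of a sequence -/

section WalshProd

/-- The Walsh product `∏ ρ_k` over the binary digits `k` of `n`. For `ρ_k = r_k(x)` it is `w_n(x)`;
keeping the sequence `ρ` abstract lets the same formula serve on the finite dyadic group and on
`[0,1)`. -/
def walshProd (n : ℕ) (ρ : ℕ → ℝ) : ℝ :=
  ∏ k ∈ range (n + 1), if n.testBit k then ρ k else 1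

/-- The Dirichlet kernel `∑_{j < n} w_j` as a function of the Rademacher sequence. -/
def dirichletSum (n : ℕ) (ρ : ℕ → ℝ) : ℝ := ∑ j ∈ range n, walshProd j ρ

/-- The unnormalised Fejér kernel `D_1 + ⋯ + D_n`. -/
def fejerSum (n : ℕ) (ρ : ℕ → ℝ) : ℝ := ∑ j ∈ range n, dirichletSum (j + 1) ρ

/-- The unnormalised Nörlund logarithmic kernel `∑_{i=1}^{n} D_{n-i} / i`, with `i` shifted by one;
its last term vanishes. -/
def norlundSum (n : ℕ) (ρ : ℕ → ℝ) : ℝ :=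
  ∑ i ∈ range n, dirichletSum (n - (i + 1)) ρ / (i + 1)

/-- Sequences with values in `{1, -1}`. -/
def IsSignSeq (ρ : ℕ → ℝ) : Prop := ∀ k, ρ k * ρ k = 1

variable {ρ : ℕ → ℝ}

lemma IsSignSeq.abs_eq_one (hρ : IsSignSeq ρ) (k : ℕ) : |ρ k| = 1 :=
  (mul_self_eq_one_iff.1 (hρ k)).elim (fun h => by simp [h]) fun h => by simp [h]

lemma walshProd_eq_prod_range {n N : ℕ} (h : n < 2 ^ N) (ρ : ℕ → ℝ) :
    walshProd n ρ = ∏ k ∈ range N, if n.testBit k then ρ k else 1 := by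
  have extend : ∀ a b : ℕ, a ≤ b → n < 2 ^ a →
      (∏ k ∈ range a, if n.testBit k then ρ k else 1) =
        ∏ k ∈ range b, if n.testBit k then ρ k else 1 := by
    intro a b hab hn
    refine prod_subset (range_mono hab) fun k _ hk => ?_
    rw [Nat.testBit_lt_two_pow (hn.trans_le (Nat.pow_le_pow_right two_pos (by simpa using hk)))]
    rfl
  have hn : n < 2 ^ (n + 1) := n.lt_succ_self.trans Nat.lt_two_pow_self
  rcases le_total (n + 1) N with hN | hN
  · exact extend _ _ hN hn
  · exact (extend _ _ hN h).symm

@[simp] lemma walshProd_zero (ρ : ℕ → ℝ) : walshProd 0 ρ = 1 := by simp [walshProd]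

lemma walshProd_mul (n : ℕ) (ρ σ : ℕ → ℝ) :
    walshProd n (ρ * σ) = walshProd n ρ * walshProd n σ := by
  unfold walshProd
  rw [← prod_mul_distrib]
  refine prod_congr rfl fun k _ => ?_
  split_ifs <;> simp

lemma IsSignSeq.walshProd (hρ : IsSignSeq ρ) : IsSignSeq fun n => walshProd n ρ := fun n => by
  rw [← walshProd_mul]
  refine prod_eq_one fun k _ => ?_
  split_ifs
  exacts [hρ k, rfl]

lemma walshProd_two_pow_add {a r : ℕ} (hr : r < 2 ^ a) (ρ : ℕ → ℝ) :
    walshProd (2 ^ a + r) ρ = ρ a * walshProd r ρ := by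
  have htop : (2 ^ a + r).testBit a = true := by
    rw [Nat.testBit_two_pow_add_eq, Nat.testBit_lt_two_pow hr, Bool.not_false]
  rw [walshProd_eq_prod_range (N := a + 1) (by rw [pow_succ]; omega),
    walshProd_eq_prod_range hr, prod_range_succ, mul_comm, if_pos htop]
  congr 1
  refine prod_congr rfl fun k hk => ?_
  rw [Nat.testBit_two_pow_add_gt (mem_range.1 hk)]

lemma walshProd_two_pow_sub_succ (hρ : IsSignSeq ρ) {a i : ℕ} (hi : i < 2 ^ a) :
    walshProd (2 ^ a - (i + 1)) ρ = walshProd (2 ^ a - 1) ρ * walshProd i ρ := by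
  have hpos : 0 < 2 ^ a := by positivity
  rw [walshProd_eq_prod_range (N := a) (by omega),
    walshProd_eq_prod_range (n := 2 ^ a - 1) (N := a) (by omega), walshProd_eq_prod_range hi,
    ← prod_mul_distrib]
  refine prod_congr rfl fun k hk => ?_
  rw [Nat.testBit_two_pow_sub_succ hi, Nat.testBit_two_pow_sub_one]
  by_cases hb : i.testBit k <;> simp [hb, mem_range.1 hk, hρ k]

lemma dirichletSum_succ (n : ℕ) (ρ : ℕ → ℝ) :
    dirichletSum (n + 1) ρ = dirichletSum n ρ + walshProd n ρ := sum_range_succ _ _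

lemma dirichletSum_two_pow_add {a r : ℕ} (hr : r ≤ 2 ^ a) (ρ : ℕ → ℝ) :
    dirichletSum (2 ^ a + r) ρ = dirichletSum (2 ^ a) ρ + ρ a * dirichletSum r ρ := by
  unfold dirichletSum
  rw [sum_range_add, mul_sum]
  congr 1
  exact sum_congr rfl fun i hi => walshProd_two_pow_add ((mem_range.1 hi).trans_le hr) ρ

lemma dirichletSum_two_pow (a : ℕ) (ρ : ℕ → ℝ) :
    dirichletSum (2 ^ a) ρ = ∏ k ∈ range a, (1 + ρ k) := by
  induction a with
  | zero => simp [dirichletSum]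
  | succ a ih =>
    rw [prod_range_succ, ← ih, pow_succ, mul_two, dirichletSum_two_pow_add le_rfl]
    ring

lemma dirichletSum_two_pow_sub (hρ : IsSignSeq ρ) {a j : ℕ} (hj : j ≤ 2 ^ a) :
    dirichletSum (2 ^ a - j) ρ =
      dirichletSum (2 ^ a) ρ - walshProd (2 ^ a - 1) ρ * dirichletSum j ρ := by
  induction j with
  | zero => simp [dirichletSum]
  | succ j ih =>
    have hstep := dirichletSum_succ (2 ^ a - (j + 1)) ρ
    rw [show 2 ^ a - (j + 1) + 1 = 2 ^ a - j by omega, ih (by omega),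
      walshProd_two_pow_sub_succ hρ hj] at hstep
    rw [dirichletSum_succ]
    linarith

lemma walshProd_mul_dirichletSum_two_pow (hρ : IsSignSeq ρ) {a r : ℕ} (hr : r < 2 ^ a) :
    walshProd r ρ * dirichletSum (2 ^ a) ρ = dirichletSum (2 ^ a) ρ := by
  rw [walshProd_eq_prod_range hr, dirichletSum_two_pow, ← prod_mul_distrib]
  refine prod_congr rfl fun k _ => ?_
  split_ifs
  · linear_combination hρ k
  · ring

lemma fejerSum_two_pow_add {a r : ℕ} (hr : r ≤ 2 ^ a) (ρ : ℕ → ℝ) :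
    fejerSum (2 ^ a + r) ρ =
      fejerSum (2 ^ a) ρ + r * dirichletSum (2 ^ a) ρ + ρ a * fejerSum r ρ := by
  have hupper : ∀ j ∈ range r, dirichletSum (2 ^ a + j + 1) ρ =
      dirichletSum (2 ^ a) ρ + ρ a * dirichletSum (j + 1) ρ := fun j hj => by
    rw [add_assoc, dirichletSum_two_pow_add ((Nat.succ_le_of_lt (mem_range.1 hj)).trans hr)]
  unfold fejerSum
  rw [sum_range_add, sum_congr rfl hupper, sum_add_distrib, sum_const, card_range, nsmul_eq_mul,
    mul_sum, add_assoc]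

end WalshProd

section LogSum

lemma logSum_eq_sum_Ico (n : ℕ) : logSum n = ∑ i ∈ Ico 1 n, (1 : ℝ) / i := by
  rw [logSum, show Icc 1 (n - 1) = Ico 1 n by ext k; rw [mem_Icc, mem_Ico]; omega]

lemma logSum_succ (n : ℕ) : logSum (n + 1) = ∑ i ∈ range n, (1 : ℝ) / (i + 1) := by
  rw [logSum_eq_sum_Ico, sum_Ico_eq_sum_range, Nat.add_sub_cancel]
  exact sum_congr rfl fun i _ => by push_cast; rw [add_comm]

lemma logSum_mono : Monotone logSum := fun m n hmn => by
  rw [logSum_eq_sum_Ico, logSum_eq_sum_Ico]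
  exact sum_le_sum_of_subset_of_nonneg (Ico_subset_Ico_right hmn) fun i _ _ => by positivity

lemma logSum_pos {n : ℕ} (hn : 2 ≤ n) : 0 < logSum n :=
  logSum_eq_sum_Ico n ▸ sum_pos (fun i hi => by have := (mem_Ico.1 hi).1; positivity) ⟨1, by simpa⟩

lemma tendsto_logSum_atTop : Tendsto logSum atTop atTop := by
  rw [← tendsto_add_atTop_iff_nat 1]
  simp only [logSum_succ]
  exact Real.tendsto_sum_range_one_div_nat_succ_atTop

lemma logSum_add_succ (m r : ℕ) :
    logSum (m + r + 1) = logSum (r + 1) + ∑ j ∈ range m, 1 / ((r : ℝ) + j + 1) := by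
  rw [logSum_succ, logSum_succ, add_comm, sum_range_add]
  simp only [Nat.cast_add]

end LogSum

section Norlund

variable {ρ : ℕ → ℝ} {a r : ℕ}

lemma sum_dirichletSum_low_norlund (hr : r < 2 ^ a) (ρ : ℕ → ℝ) :
    ∑ i ∈ range r, dirichletSum (2 ^ a + r - (i + 1)) ρ / ((i : ℝ) + 1) =
      logSum (r + 1) * dirichletSum (2 ^ a) ρ + ρ a * norlundSum r ρ := by
  rw [logSum_succ, norlundSum, sum_mul, mul_sum, ← sum_add_distrib]
  refine sum_congr rfl fun i hi => ?_
  have hir := mem_range.1 hi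
  rw [show 2 ^ a + r - (i + 1) = 2 ^ a + (r - (i + 1)) by omega,
    dirichletSum_two_pow_add (by omega)]
  ring

lemma sum_dirichletSum_high_norlund (hρ : IsSignSeq ρ) :
    ∑ j ∈ range (2 ^ a), dirichletSum (2 ^ a + r - (r + j + 1)) ρ / (((r + j : ℕ) : ℝ) + 1) =
      (∑ j ∈ range (2 ^ a), 1 / ((r : ℝ) + j + 1)) * dirichletSum (2 ^ a) ρ -
        walshProd (2 ^ a - 1) ρ *
          ∑ j ∈ range (2 ^ a), 1 / ((r : ℝ) + j + 1) * dirichletSum (j + 1) ρ := by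
  rw [sum_mul, mul_sum, ← sum_sub_distrib]
  refine sum_congr rfl fun j hj => ?_
  have hja := mem_range.1 hj
  rw [show 2 ^ a + r - (r + j + 1) = 2 ^ a - (j + 1) by omega,
    dirichletSum_two_pow_sub hρ hja]
  push_cast
  ring

lemma norlundSum_two_pow_add (hρ : IsSignSeq ρ) (hr : r < 2 ^ a) :
    norlundSum (2 ^ a + r) ρ = logSum (2 ^ a + r + 1) * dirichletSum (2 ^ a) ρ -
      walshProd (2 ^ a - 1) ρ *
        ∑ j ∈ range (2 ^ a), 1 / ((r : ℝ) + j + 1) * dirichletSum (j + 1) ρ +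
      ρ a * norlundSum r ρ := by
  conv_lhs => rw [norlundSum, show range (2 ^ a + r) = range (r + 2 ^ a) by rw [add_comm]]
  rw [sum_range_add, sum_dirichletSum_low_norlund hr, sum_dirichletSum_high_norlund hρ,
    logSum_add_succ]
  ring

end Norlund

/-! ### The finite dyadic group -/

section DyadicGroup

/-- The dyadic group of order `2^A`, written multiplicatively: `[0,1)` at resolution `2^{-A}`. -/
abbrev DyadicGroup (A : ℕ) := Fin A → ℤˣ

/-- The Rademacher sequence of a point of the dyadic group, continued by `1`. -/
def signs {A : ℕ} (x : DyadicGroup A) (k : ℕ) : ℝ :=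
  if h : k < A then ((x ⟨k, h⟩ : ℤ) : ℝ) else 1

variable {A : ℕ}

lemma signs_mul (x y : DyadicGroup A) : signs (x * y) = signs x * signs y := by
  ext k
  by_cases h : k < A <;> simp [signs, h]

lemma isSignSeq_signs (x : DyadicGroup A) : IsSignSeq (signs x) := fun k => by
  rw [← Pi.mul_apply, ← signs_mul]
  by_cases h : k < A <;> simp [signs, h]

lemma mul_self_eq_one (x : DyadicGroup A) : x * x = 1 := funext fun k => Int.units_mul_self (x k)

lemma expect_mul_left {G M : Type*} [Group G] [Fintype G] [AddCommMonoid M] [Module ℚ≥0 M]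
    (g : G) (F : G → M) : 𝔼 t, F (g * t) = 𝔼 t, F t :=
  Fintype.expect_equiv (Equiv.mulLeft g) _ _ fun _ => rfl

variable {a n : ℕ} {κ : (ℕ → ℝ) → ℝ}

lemma signs_mulSingle_of_eq (ha : a < A) :
    signs (Pi.mulSingle ⟨a, ha⟩ (-1) : DyadicGroup A) a = -1 := by
  simp [signs, ha]

lemma signs_mulSingle_of_ne (ha : a < A) {k : ℕ} (hk : k ≠ a) :
    signs (Pi.mulSingle ⟨a, ha⟩ (-1) : DyadicGroup A) k = 1 := by
  by_cases h : k < A <;> simp [signs, h, hk]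

lemma expect_signs_mul_eq_zero (ha : a < A) (hκ : DependsOn κ (Set.Iio a)) :
    𝔼 t : DyadicGroup A, signs t a * κ (signs t) = 0 := by
  have hflip := expect_mul_left (Pi.mulSingle ⟨a, ha⟩ (-1) : DyadicGroup A)
    fun t => signs t a * κ (signs t)
  have hodd : ∀ t : DyadicGroup A,
      signs (Pi.mulSingle ⟨a, ha⟩ (-1) * t) a * κ (signs (Pi.mulSingle ⟨a, ha⟩ (-1) * t)) =
        -(signs t a * κ (signs t)) := fun t => by
    rw [signs_mul, hκ (y := signs t), Pi.mul_apply, signs_mulSingle_of_eq, neg_one_mul, neg_mul]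
    intro k hk
    rw [Pi.mul_apply, signs_mulSingle_of_ne ha (ne_of_lt hk), one_mul]
  simp only [hodd, expect_neg_distrib] at hflip
  linarith

lemma dependsOn_walshProd (hn : n < 2 ^ a) : DependsOn (walshProd n) (Set.Iio a) := by
  intro ρ σ h
  rw [walshProd_eq_prod_range hn, walshProd_eq_prod_range hn]
  exact prod_congr rfl fun k hk => by rw [h k (mem_range.1 hk)]

lemma dependsOn_dirichletSum (hn : n ≤ 2 ^ a) : DependsOn (dirichletSum n) (Set.Iio a) :=
  fun _ _ h => sum_congr rfl fun _ hj => dependsOn_walshProd ((mem_range.1 hj).trans_le hn) h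

lemma dependsOn_fejerSum (hn : n ≤ 2 ^ a) : DependsOn (fejerSum n) (Set.Iio a) :=
  fun _ _ h => sum_congr rfl fun _ hj =>
    dependsOn_dirichletSum ((Nat.succ_le_of_lt (mem_range.1 hj)).trans hn) h

end DyadicGroup

section KernelNorm

/-- The `L¹` norm of a convolution kernel on the dyadic group of order `2^A`. -/
def kernelNorm (A : ℕ) (κ : (ℕ → ℝ) → ℝ) : ℝ := 𝔼 t : DyadicGroup A, |κ (signs t)|

variable {A : ℕ} {κ μ : (ℕ → ℝ) → ℝ}

lemma kernelNorm_congr (h : ∀ ρ, IsSignSeq ρ → |κ ρ| = |μ ρ|) :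
    kernelNorm A κ = kernelNorm A μ :=
  expect_congr rfl fun t _ => h _ (isSignSeq_signs t)

lemma kernelNorm_add_le (κ μ : (ℕ → ℝ) → ℝ) :
    kernelNorm A (fun ρ => κ ρ + μ ρ) ≤ kernelNorm A κ + kernelNorm A μ := by
  unfold kernelNorm
  rw [← expect_add_distrib]
  exact expect_le_expect fun t _ => abs_add_le _ _

lemma kernelNorm_const_mul (c : ℝ) (κ : (ℕ → ℝ) → ℝ) :
    kernelNorm A (fun ρ => c * κ ρ) = |c| * kernelNorm A κ := by
  simp only [kernelNorm, abs_mul, mul_expect]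

lemma kernelNorm_sum_le {ι : Type*} (s : Finset ι) (κ : ι → (ℕ → ℝ) → ℝ) :
    kernelNorm A (fun ρ => ∑ i ∈ s, κ i ρ) ≤ ∑ i ∈ s, kernelNorm A (κ i) := by
  unfold kernelNorm
  rw [← expect_sum_comm]
  exact expect_le_expect fun t _ => abs_sum_le_sum_abs _ _

lemma kernelNorm_sign_mul {θ : (ℕ → ℝ) → ℝ} (hθ : ∀ ρ, IsSignSeq ρ → |θ ρ| = 1)
    (κ : (ℕ → ℝ) → ℝ) : kernelNorm A (fun ρ => θ ρ * κ ρ) = kernelNorm A κ :=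
  kernelNorm_congr fun ρ hρ => by rw [abs_mul, hθ ρ hρ, one_mul]

variable {a : ℕ}

lemma IsSignSeq.one_add_nonneg {ρ : ℕ → ℝ} (hρ : IsSignSeq ρ) (k : ℕ) : 0 ≤ 1 + ρ k := by
  linarith [neg_abs_le (ρ k), hρ.abs_eq_one k]

lemma kernelNorm_one_add_mul (ha : a < A) (hκ : DependsOn κ (Set.Iio a)) :
    kernelNorm A (fun ρ => (1 + ρ a) * κ ρ) = kernelNorm A κ := by
  have hsplit : ∀ t : DyadicGroup A, |(1 + signs t a) * κ (signs t)| =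
      |κ (signs t)| + signs t a * |κ (signs t)| := fun t => by
    rw [abs_mul, abs_of_nonneg ((isSignSeq_signs t).one_add_nonneg a)]
    ring
  simp only [kernelNorm, hsplit, expect_add_distrib]
  rw [expect_signs_mul_eq_zero (κ := fun ρ => |κ ρ|) ha fun ρ σ h => congrArg _ (hκ h), add_zero]

lemma kernelNorm_dirichletSum_two_pow (ha : a ≤ A) :
    kernelNorm A (dirichletSum (2 ^ a)) = 1 := by
  induction a with
  | zero => simp [kernelNorm, dirichletSum]
  | succ a ih =>
    rw [← ih (Nat.le_of_succ_le ha),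
      ← kernelNorm_one_add_mul (Nat.lt_of_succ_le ha) (dependsOn_dirichletSum le_rfl)]
    congr 1
    ext ρ
    rw [dirichletSum_two_pow, dirichletSum_two_pow, prod_range_succ, mul_comm]

lemma kernelNorm_fejerSum_two_pow_le (ha : a ≤ A) :
    kernelNorm A (fejerSum (2 ^ a)) ≤ 2 ^ a := by
  induction a with
  | zero => simp [kernelNorm, fejerSum, dirichletSum]
  | succ a ih =>
    have hdouble : fejerSum (2 ^ (a + 1)) =
        fun ρ => (1 + ρ a) * fejerSum (2 ^ a) ρ + 2 ^ a * dirichletSum (2 ^ a) ρ := by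
      ext ρ
      rw [pow_succ, mul_two, fejerSum_two_pow_add le_rfl]
      push_cast
      ring
    calc kernelNorm A (fejerSum (2 ^ (a + 1)))
        ≤ kernelNorm A (fejerSum (2 ^ a)) + 2 ^ a := by
          rw [hdouble]
          refine (kernelNorm_add_le _ _).trans_eq ?_
          rw [kernelNorm_one_add_mul (Nat.lt_of_succ_le ha) (dependsOn_fejerSum le_rfl),
            kernelNorm_const_mul, kernelNorm_dirichletSum_two_pow (Nat.le_of_succ_le ha), mul_one,
            abs_of_pos (by positivity)]
      _ ≤ 2 ^ a + 2 ^ a := by gcongr; exact ih (Nat.le_of_succ_le ha)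
      _ = 2 ^ (a + 1) := by ring

@[elab_as_elim]
lemma two_pow_add_induction {P : ℕ → Prop} (zero : P 0)
    (two_pow_add : ∀ a r, r < 2 ^ a → P r → P (2 ^ a + r)) (n : ℕ) : P n := by
  induction n using Nat.strong_induction_on with
  | _ n ih =>
    rcases Nat.eq_zero_or_pos n with rfl | hn
    · exact zero
    have hle := Nat.pow_log_le_self 2 hn.ne'
    have hlt : n - 2 ^ Nat.log 2 n < 2 ^ Nat.log 2 n := by
      have := Nat.lt_pow_succ_log_self one_lt_two n
      rw [pow_succ] at this
      omega
    rw [← Nat.add_sub_of_le hle]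
    exact two_pow_add _ _ hlt (ih _ (by have := Nat.two_pow_pos (Nat.log 2 n); omega))

lemma kernelNorm_fejerSum_le (n : ℕ) : n < 2 ^ A → kernelNorm A (fejerSum n) ≤ 2 * n := by
  induction n using two_pow_add_induction with
  | zero => simp [kernelNorm, fejerSum]
  | two_pow_add a r hr ih =>
    intro hn
    have ha : a ≤ A := (Nat.pow_lt_pow_iff_right one_lt_two).1 ((Nat.le_add_right _ r).trans_lt hn)
      |>.le
    have hra : (r : ℝ) ≤ 2 ^ a := by exact_mod_cast hr.le
    have hpow := kernelNorm_fejerSum_two_pow_le ha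
    have hlow := ih (by omega)
    calc kernelNorm A (fejerSum (2 ^ a + r))
        ≤ kernelNorm A (fejerSum (2 ^ a)) + r + kernelNorm A (fejerSum r) := by
          simp only [funext fun ρ => fejerSum_two_pow_add hr.le ρ]
          refine (kernelNorm_add_le _ _).trans (add_le_add ((kernelNorm_add_le _ _).trans ?_) ?_)
          · rw [kernelNorm_const_mul, kernelNorm_dirichletSum_two_pow ha, mul_one, Nat.abs_cast]
          · exact (kernelNorm_sign_mul (fun ρ hρ => hρ.abs_eq_one a) _).le
      _ ≤ 2 * ((2 ^ a + r : ℕ) : ℝ) := by push_cast; linarith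

lemma kernelNorm_sum_antitone_mul_dirichletSum_le {c : ℕ → ℝ} (hc : Antitone c) (hc0 : ∀ j, 0 ≤ c j)
    {N : ℕ} (hN : N < 2 ^ A) :
    kernelNorm A (fun ρ => ∑ j ∈ range N, c j * dirichletSum (j + 1) ρ) ≤
      2 * ∑ j ∈ range N, c j := by
  have habel : ∀ u : ℕ → ℝ, ∑ j ∈ range N, c j * u j = c (N - 1) * ∑ j ∈ range N, u j +
      ∑ j ∈ range (N - 1), (c j - c (j + 1)) * ∑ i ∈ range (j + 1), u i := fun u => by
    simp only [← smul_eq_mul, sum_range_by_parts c u N, sub_eq_add_neg (_ • _), ← sum_neg_distrib,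
      ← neg_smul, neg_sub]
  have hfejer : ∀ k ≤ N, kernelNorm A (fejerSum k) ≤ 2 * k := fun k hk =>
    kernelNorm_fejerSum_le k (hk.trans_lt hN)
  have hone := habel fun _ => 1
  simp only [mul_one, sum_const, card_range, nsmul_eq_mul] at hone
  calc kernelNorm A (fun ρ => ∑ j ∈ range N, c j * dirichletSum (j + 1) ρ)
      = kernelNorm A (fun ρ => c (N - 1) * fejerSum N ρ +
          ∑ j ∈ range (N - 1), (c j - c (j + 1)) * fejerSum (j + 1) ρ) := by
        simp only [habel, fejerSum]
    _ ≤ c (N - 1) * (2 * N) +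
          ∑ j ∈ range (N - 1), (c j - c (j + 1)) * (2 * (j + 1 : ℕ)) := by
        refine (kernelNorm_add_le _ _).trans (add_le_add ?_ ((kernelNorm_sum_le _ _).trans
          (sum_le_sum fun j hj => ?_)))
        · rw [kernelNorm_const_mul, abs_of_nonneg (hc0 _)]
          exact mul_le_mul_of_nonneg_left (hfejer N le_rfl) (hc0 _)
        · have hdiff : 0 ≤ c j - c (j + 1) := sub_nonneg.2 (hc j.le_succ)
          rw [kernelNorm_const_mul, abs_of_nonneg hdiff]
          exact mul_le_mul_of_nonneg_left
            (hfejer (j + 1) (by have := mem_range.1 hj; omega)) hdiff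
    _ = 2 * ∑ j ∈ range N, c j := by
        rw [hone, mul_add, mul_sum]
        congr 1
        · ring
        · exact sum_congr rfl fun j _ => by ring

end KernelNorm

/-! ### Martingale transforms inside the Dirichlet and Nörlund kernels -/

section TransformKernel

/-- The kernel of the dyadic martingale transform with multipliers `v`: convolution with
`ρ_a D_{2^a}` is the `a`-th martingale difference. -/
def transformKernel (A : ℕ) (v : ℕ → ℝ) (ρ : ℕ → ℝ) : ℝ :=
  ∑ a ∈ range A, v a * (ρ a * dirichletSum (2 ^ a) ρ)

/-- The multiplier supported on the binary digits of `n`, with value `c (n mod 2^{a+1})` at the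
digit `a`. -/
def bitCoeff (c : ℕ → ℝ) (n a : ℕ) : ℝ := if n.testBit a then c (n % 2 ^ (a + 1)) else 0

variable {A a r : ℕ} {ρ : ℕ → ℝ}

lemma abs_bitCoeff_le {c : ℕ → ℝ} {n : ℕ} {C : ℝ} (hC : 0 ≤ C) (hc : ∀ m ≤ n, |c m| ≤ C) (a : ℕ) :
    |bitCoeff c n a| ≤ C := by
  unfold bitCoeff
  split_ifs
  · exact hc _ (Nat.mod_le _ _)
  · rwa [abs_zero]

lemma bitCoeff_two_pow_add (hr : r < 2 ^ a) (c : ℕ → ℝ) (b : ℕ) :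
    bitCoeff c (2 ^ a + r) b = (if b = a then c (2 ^ a + r) else 0) + bitCoeff c r b := by
  unfold bitCoeff
  rcases lt_trichotomy b a with hb | rfl | hb
  · have hmod : (2 ^ a + r) % 2 ^ (b + 1) = r % 2 ^ (b + 1) := by
      rw [← Nat.sub_add_cancel (Nat.succ_le_of_lt hb), pow_add, Nat.add_mod, Nat.mul_mod_left,
        zero_add, Nat.mod_mod]
    rw [Nat.testBit_two_pow_add_gt hb, hmod, if_neg hb.ne, zero_add]
  · rw [Nat.testBit_two_pow_add_eq, Nat.testBit_lt_two_pow hr,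
      Nat.mod_eq_of_lt (by rw [pow_succ]; omega)]
    simp
  · have hpow : 2 ^ (a + 1) ≤ 2 ^ b := Nat.pow_le_pow_right two_pos hb
    rw [pow_succ] at hpow
    rw [Nat.testBit_lt_two_pow (by omega), Nat.testBit_lt_two_pow (by omega), if_neg hb.ne']
    simp

lemma walshProd_mul_transformKernel_two_pow_add (hρ : IsSignSeq ρ) (ha : a < A) (hr : r < 2 ^ a)
    (c : ℕ → ℝ) :
    walshProd (2 ^ a + r) ρ * transformKernel A (bitCoeff c (2 ^ a + r)) ρ =
      c (2 ^ a + r) * dirichletSum (2 ^ a) ρ +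
        ρ a * (walshProd r ρ * transformKernel A (bitCoeff c r) ρ) := by
  have hsum : transformKernel A (bitCoeff c (2 ^ a + r)) ρ =
      c (2 ^ a + r) * (ρ a * dirichletSum (2 ^ a) ρ) + transformKernel A (bitCoeff c r) ρ := by
    simp [transformKernel, bitCoeff_two_pow_add hr, add_mul, sum_add_distrib, ha]
  rw [hsum, walshProd_two_pow_add hr]
  linear_combination (c (2 ^ a + r) * (walshProd r ρ * dirichletSum (2 ^ a) ρ)) * hρ a +
    c (2 ^ a + r) * walshProd_mul_dirichletSum_two_pow hρ hr

lemma lt_of_two_pow_add_lt (h : 2 ^ a + r < 2 ^ A) : a < A :=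
  (Nat.pow_lt_pow_iff_right one_lt_two).1 ((Nat.le_add_right _ r).trans_lt h)

lemma dirichletSum_eq_walshProd_mul_transformKernel (hρ : IsSignSeq ρ) (n : ℕ) :
    n < 2 ^ A → dirichletSum n ρ = walshProd n ρ * transformKernel A (bitCoeff 1 n) ρ := by
  induction n using two_pow_add_induction with
  | zero => simp [dirichletSum, transformKernel, bitCoeff]
  | two_pow_add a r hr ih =>
    intro hn
    rw [walshProd_mul_transformKernel_two_pow_add hρ (lt_of_two_pow_add_lt hn) hr,
      ← ih (by omega), dirichletSum_two_pow_add hr.le, Pi.one_apply, one_mul]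

/-- What remains of the Nörlund kernel after its modulated martingale transform is removed. -/
def norlundError (A n : ℕ) (ρ : ℕ → ℝ) : ℝ :=
  norlundSum n ρ - walshProd n ρ * transformKernel A (bitCoeff (fun m => logSum (m + 1)) n) ρ

lemma norlundError_two_pow_add (hρ : IsSignSeq ρ) (ha : a < A) (hr : r < 2 ^ a) :
    norlundError A (2 ^ a + r) ρ = -walshProd (2 ^ a - 1) ρ *
        ∑ j ∈ range (2 ^ a), 1 / ((r : ℝ) + j + 1) * dirichletSum (j + 1) ρ +
      ρ a * norlundError A r ρ := by
  rw [norlundError, norlundError, norlundSum_two_pow_add hρ hr,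
    walshProd_mul_transformKernel_two_pow_add hρ ha hr]
  ring

lemma kernelNorm_norlundError_le (n : ℕ) :
    n < 2 ^ A → kernelNorm A (norlundError A n) ≤ 2 * logSum (n + 1) := by
  induction n using two_pow_add_induction with
  | zero =>
    intro _
    simp [kernelNorm, norlundError, norlundSum, transformKernel, bitCoeff, logSum]
  | two_pow_add a r hr ih =>
    intro hn
    have hanti : Antitone fun j : ℕ => 1 / ((r : ℝ) + j + 1) := fun i j hij => by
      simp only
      gcongr
    calc kernelNorm A (norlundError A (2 ^ a + r))
        = kernelNorm A (fun ρ => -walshProd (2 ^ a - 1) ρ *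
              ∑ j ∈ range (2 ^ a), 1 / ((r : ℝ) + j + 1) * dirichletSum (j + 1) ρ +
            ρ a * norlundError A r ρ) :=
          kernelNorm_congr fun ρ hρ => by
            rw [norlundError_two_pow_add hρ (lt_of_two_pow_add_lt hn) hr]
      _ ≤ 2 * ∑ j ∈ range (2 ^ a), 1 / ((r : ℝ) + j + 1) + 2 * logSum (r + 1) := by
          refine (kernelNorm_add_le _ _).trans (add_le_add ?_ ?_)
          · rw [kernelNorm_sign_mul fun ρ hρ => by rw [abs_neg, hρ.walshProd.abs_eq_one]]
            exact kernelNorm_sum_antitone_mul_dirichletSum_le hanti (fun j => by positivity)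
              (by omega)
          · rw [kernelNorm_sign_mul fun ρ hρ => hρ.abs_eq_one a]
            exact ih (by omega)
      _ = 2 * logSum (2 ^ a + r + 1) := by
          rw [logSum_add_succ]
          ring

end TransformKernel

/-! ### Convolution on the dyadic group and Burkholder's inequality -/

section Conv

/-- Convolution with the kernel `κ`, normalised as an average over the dyadic group. -/
def conv {A : ℕ} (κ : (ℕ → ℝ) → ℝ) (F : DyadicGroup A → ℝ) (x : DyadicGroup A) : ℝ :=
  𝔼 t, κ (signs (x * t)) * F t

variable {A a : ℕ} {κ μ : (ℕ → ℝ) → ℝ}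

lemma conv_congr (h : ∀ ρ, IsSignSeq ρ → κ ρ = μ ρ) (F : DyadicGroup A → ℝ) :
    conv κ F = conv μ F :=
  funext fun x => expect_congr rfl fun t _ => by rw [h _ (isSignSeq_signs (x * t))]

lemma conv_add (κ μ : (ℕ → ℝ) → ℝ) (F : DyadicGroup A → ℝ) (x : DyadicGroup A) :
    conv (fun ρ => κ ρ + μ ρ) F x = conv κ F x + conv μ F x := by
  simp only [conv, add_mul, expect_add_distrib]

lemma conv_const_mul (c : ℝ) (κ : (ℕ → ℝ) → ℝ) (F : DyadicGroup A → ℝ) (x : DyadicGroup A) :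
    conv (fun ρ => c * κ ρ) F x = c * conv κ F x := by
  simp only [conv, mul_assoc, ← mul_expect]

lemma conv_const_mul_right (κ : (ℕ → ℝ) → ℝ) (c : ℝ) (F : DyadicGroup A → ℝ) (x : DyadicGroup A) :
    conv κ (fun t => c * F t) x = c * conv κ F x := by
  simp only [conv, mul_left_comm _ c, ← mul_expect]

lemma conv_sum {ι : Type*} (s : Finset ι) (κ : ι → (ℕ → ℝ) → ℝ) (F : DyadicGroup A → ℝ)
    (x : DyadicGroup A) : conv (fun ρ => ∑ i ∈ s, κ i ρ) F x = ∑ i ∈ s, conv (κ i) F x := by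
  simp only [conv, sum_mul, expect_sum_comm]

lemma conv_walshProd_mul (n : ℕ) (κ : (ℕ → ℝ) → ℝ) (F : DyadicGroup A → ℝ) (x : DyadicGroup A) :
    conv (fun ρ => walshProd n ρ * κ ρ) F x =
      walshProd n (signs x) * conv κ (fun t => walshProd n (signs t) * F t) x := by
  simp only [conv, mul_expect]
  refine expect_congr rfl fun t _ => ?_
  rw [signs_mul, walshProd_mul]
  ring

lemma conv_mulSingle_mul (ha : a < A) (hκ : DependsOn κ (Set.Iio a)) (F : DyadicGroup A → ℝ)
    (x : DyadicGroup A) : conv κ F (Pi.mulSingle ⟨a, ha⟩ (-1) * x) = conv κ F x := by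
  refine expect_congr rfl fun t _ => ?_
  rw [mul_assoc, signs_mul, hκ fun k hk => ?_]
  rw [Pi.mul_apply, signs_mulSingle_of_ne ha (ne_of_lt hk), one_mul]

lemma conv_sign_mul_mulSingle_mul (ha : a < A) (hκ : DependsOn κ (Set.Iio a))
    (F : DyadicGroup A → ℝ) (x : DyadicGroup A) :
    conv (fun ρ => ρ a * κ ρ) F (Pi.mulSingle ⟨a, ha⟩ (-1) * x) =
      -conv (fun ρ => ρ a * κ ρ) F x := by
  unfold conv
  rw [← expect_neg_distrib]
  refine expect_congr rfl fun t _ => ?_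
  have hflip : signs (Pi.mulSingle ⟨a, ha⟩ (-1) * (x * t)) a = -signs (x * t) a := by
    rw [signs_mul, Pi.mul_apply, signs_mulSingle_of_eq, neg_one_mul]
  have hinv : κ (signs (Pi.mulSingle ⟨a, ha⟩ (-1) * (x * t))) = κ (signs (x * t)) :=
    hκ fun k hk => by
      rw [signs_mul, Pi.mul_apply, signs_mulSingle_of_ne ha (ne_of_lt hk), one_mul]
  rw [mul_assoc (Pi.mulSingle _ _)]
  simp only [hflip, hinv, neg_mul]

lemma dirichletSum_two_pow_signs_mul (x t : DyadicGroup A) :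
    dirichletSum (2 ^ A) (signs (x * t)) = if x = t then 2 ^ A else 0 := by
  rw [dirichletSum_two_pow]
  split_ifs with h
  · rw [h, mul_self_eq_one]
    refine (prod_congr rfl fun k hk => ?_).trans (by rw [prod_const, card_range])
    rw [signs, dif_pos (mem_range.1 hk), Pi.one_apply, Units.val_one, Int.cast_one,
      one_add_one_eq_two]
  · obtain ⟨k, hk⟩ := Function.ne_iff.1 h
    refine prod_eq_zero (mem_range.2 k.2) ?_
    have hneg : (x * t) k = -1 := (Int.units_eq_one_or _).resolve_left fun hone => hk <| by
      rw [eq_inv_of_mul_eq_one_left hone, Int.units_inv_eq_self]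
    rw [signs, dif_pos k.2, hneg]
    simp

lemma conv_dirichletSum_two_pow (F : DyadicGroup A → ℝ) : conv (dirichletSum (2 ^ A)) F = F := by
  ext x
  rw [conv, Fintype.expect_eq_sum_div_card]
  simp [dirichletSum_two_pow_signs_mul]

end Conv

section Burkholder

/-- Concavity of `U` along all segments of slope at most one. -/
def IsZigzagConcave (U : ℝ → ℝ → ℝ) : Prop :=
  ∀ x y a b : ℝ, |b| ≤ |a| → U (x + a) (y + b) + U (x - a) (y - b) ≤ 2 * U x y

variable {A : ℕ} {U : ℝ → ℝ → ℝ} {v : ℕ → ℝ}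

lemma dependsOn_transformKernel (a : ℕ) (v : ℕ → ℝ) :
    DependsOn (transformKernel a v) (Set.Iio a) := fun _ _ h =>
  sum_congr rfl fun b hb => by
    rw [dependsOn_dirichletSum (Nat.pow_le_pow_right two_pos (mem_range.1 hb).le) h,
      h b (mem_range.1 hb)]

lemma transformKernel_succ (a : ℕ) (v : ℕ → ℝ) : transformKernel (a + 1) v =
    fun ρ => transformKernel a v ρ + v a * (ρ a * dirichletSum (2 ^ a) ρ) :=
  funext fun _ => sum_range_succ _ _

lemma dirichletSum_two_pow_succ (a : ℕ) : dirichletSum (2 ^ (a + 1)) =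
    fun ρ => dirichletSum (2 ^ a) ρ + ρ a * dirichletSum (2 ^ a) ρ := by
  ext ρ
  rw [pow_succ, mul_two, dirichletSum_two_pow_add le_rfl]

/-- Reflecting the `a`-th coordinate reverses the `a`-th martingale differences, so concavity along
the segment they span shows that the left side decreases with `a`. -/
lemma IsZigzagConcave.expect_conv_le (hU : IsZigzagConcave U) (hv : ∀ a, |v a| ≤ 1)
    (F : DyadicGroup A → ℝ) (a : ℕ) : a ≤ A →
      𝔼 x, U (conv (dirichletSum (2 ^ a)) F x) (conv (transformKernel a v) F x) ≤
        U (𝔼 t, F t) 0 := by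
  induction a with
  | zero => simp [conv, dirichletSum, transformKernel]
  | succ a ih =>
    intro ha
    refine le_trans ?_ (ih (Nat.le_of_succ_le ha))
    set E := conv (dirichletSum (2 ^ a)) F
    set T := conv (transformKernel a v) F
    set Δ := conv (fun ρ => ρ a * dirichletSum (2 ^ a) ρ) F
    have hE : ∀ x, conv (dirichletSum (2 ^ (a + 1))) F x = E x + Δ x := fun x => by
      rw [dirichletSum_two_pow_succ, conv_add]
    have hT : ∀ x, conv (transformKernel (a + 1) v) F x = T x + v a * Δ x := fun x => by
      rw [transformKernel_succ, conv_add, conv_const_mul]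
    have hreflect := expect_mul_left (Pi.mulSingle ⟨a, ha⟩ (-1) : DyadicGroup A)
      fun x => U (E x + Δ x) (T x + v a * Δ x)
    simp only [E, T, Δ, conv_mulSingle_mul (Nat.lt_of_succ_le ha) (dependsOn_dirichletSum le_rfl),
      conv_mulSingle_mul (Nat.lt_of_succ_le ha) (dependsOn_transformKernel a v),
      conv_sign_mul_mulSingle_mul (Nat.lt_of_succ_le ha) (dependsOn_dirichletSum le_rfl)]
      at hreflect
    have hconcave : 𝔼 x, U (E x + Δ x) (T x + v a * Δ x) + 𝔼 x, U (E x + -Δ x) (T x + v a * -Δ x) ≤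
        2 * 𝔼 x, U (E x) (T x) := by
      rw [← expect_add_distrib, mul_expect]
      refine expect_le_expect fun x _ => ?_
      rw [mul_neg, ← sub_eq_add_neg, ← sub_eq_add_neg]
      refine hU _ _ _ _ ?_
      rw [abs_mul]
      exact mul_le_of_le_one_left (abs_nonneg _) (hv a)
    simp only [hE, hT]
    linarith

lemma IsZigzagConcave.expect_transform_le (hU : IsZigzagConcave U) (hv : ∀ a, |v a| ≤ 1)
    (F : DyadicGroup A → ℝ) : 𝔼 x, U (F x) (conv (transformKernel A v) F x) ≤ U (𝔼 t, F t) 0 := by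
  have h := hU.expect_conv_le hv F A le_rfl
  rwa [conv_dirichletSum_two_pow] at h

end Burkholder

section WeakBurkholder

/-- Burkholder's function for the weak type `(1,1)` inequality. -/
def weakBurkholder (x y : ℝ) : ℝ := if |x| + |y| < 1 then y ^ 2 - x ^ 2 else 1 - 2 * |x|

lemma weakBurkholder_le (x y : ℝ) : weakBurkholder x y ≤ 1 - 2 * |x| := by
  unfold weakBurkholder
  split_ifs with h
  · rw [← sq_abs x, ← sq_abs y]
    nlinarith [abs_nonneg x, abs_nonneg y]
  · exact le_rfl

lemma weakBurkholder_le_sq_sub_sq {x : ℝ} (hx : |x| ≤ 1) (y : ℝ) :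
    weakBurkholder x y ≤ y ^ 2 - x ^ 2 := by
  unfold weakBurkholder
  split_ifs with h
  · exact le_rfl
  · have hsq : (1 - |x|) ^ 2 ≤ |y| ^ 2 := pow_le_pow_left₀ (by linarith) (by linarith) 2
    rw [sq_abs y] at hsq
    nlinarith [sq_abs x]

lemma one_sub_two_mul_abs_le_tangent {x y a b : ℝ} (h : |x| + |y| < 1) (hab : |b| ≤ |a|)
    (hxa : 1 < |x + a|) :
    1 - 2 * |x + a| ≤ y ^ 2 - x ^ 2 + (2 * y * b - 2 * x * a) := by
  have hyb : -(|y| * |a|) ≤ y * b := by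
    have hprod := neg_abs_le (y * b)
    rw [abs_mul] at hprod
    nlinarith [abs_nonneg y]
  rcases le_or_gt 0 (x + a) with hpos | hneg
  · rw [abs_of_nonneg hpos] at hxa ⊢
    have ha : 0 < a := by linarith [abs_nonneg y, le_abs_self x]
    rw [abs_of_pos ha] at hyb
    have : 0 ≤ (1 - x - |y|) * (2 * a - (1 - x) - |y|) :=
      mul_nonneg (by linarith [le_abs_self x]) (by linarith [le_abs_self x])
    nlinarith [sq_abs y]
  · rw [abs_of_neg hneg] at hxa ⊢
    have ha : a < 0 := by linarith [abs_nonneg y, neg_abs_le x]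
    rw [abs_of_neg ha] at hyb
    have : 0 ≤ (1 + x - |y|) * (2 * (-a) - (1 + x) - |y|) :=
      mul_nonneg (by linarith [neg_abs_le x]) (by linarith [neg_abs_le x])
    nlinarith [sq_abs y]

lemma weakBurkholder_le_tangent {x y a b : ℝ} (h : |x| + |y| < 1) (hab : |b| ≤ |a|) :
    weakBurkholder (x + a) (y + b) ≤ y ^ 2 - x ^ 2 + (2 * y * b - 2 * x * a) := by
  rcases le_or_gt |x + a| 1 with hxa | hxa
  · refine (weakBurkholder_le_sq_sub_sq hxa _).trans ?_
    nlinarith [sq_le_sq.2 hab]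
  · exact (weakBurkholder_le _ _).trans (one_sub_two_mul_abs_le_tangent h hab hxa)

lemma isZigzagConcave_weakBurkholder : IsZigzagConcave weakBurkholder := by
  intro x y a b hab
  by_cases h : |x| + |y| < 1
  · have hplus := weakBurkholder_le_tangent h hab
    have hminus := weakBurkholder_le_tangent (a := -a) (b := -b) h (by simpa using hab)
    have hxy : weakBurkholder x y = y ^ 2 - x ^ 2 := if_pos h
    rw [← sub_eq_add_neg, ← sub_eq_add_neg] at hminus
    linarith
  · have hxy : weakBurkholder x y = 1 - 2 * |x| := if_neg h
    have htriangle : 2 * |x| ≤ |x + a| + |x - a| := by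
      have := abs_add_le (x + a) (x - a)
      rwa [show x + a + (x - a) = 2 * x by ring, abs_mul, abs_two] at this
    linarith [weakBurkholder_le (x + a) (y + b), weakBurkholder_le (x - a) (y - b)]

lemma ite_sub_le_weakBurkholder (x y : ℝ) :
    (if 1 ≤ |y| then (1 : ℝ) else 0) - 2 * |x| ≤ weakBurkholder x y := by
  unfold weakBurkholder
  have := abs_nonneg x
  have := abs_nonneg y
  split_ifs
  · linarith
  · linarith
  · nlinarith [sq_abs x, sq_nonneg y]
  · linarith

lemma weakBurkholder_zero_right_nonpos (x : ℝ) : weakBurkholder x 0 ≤ 0 := by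
  unfold weakBurkholder
  split_ifs with h
  · nlinarith [sq_nonneg x]
  · rw [abs_zero, add_zero] at h
    linarith

end WeakBurkholder

section PowerBurkholder

/-- For even `p`, a zigzag concave majorant of `y^p - (6p)^p x^p` that is nonpositive for `y = 0`;
it replaces Burkholder's function for `L^p`, at the price of a worse constant. -/
def powBurkholder (p : ℕ) (x y : ℝ) : ℝ := 4 * y ^ p - ((y + 3 * x) ^ p + (y - 3 * x) ^ p) / 2

variable {p : ℕ}

lemma two_mul_pow_le_add_pow_add_sub_pow (hp : Even p) (y z : ℝ) :
    2 * y ^ p ≤ (y + z) ^ p + (y - z) ^ p := by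
  have hconv := (hp.convexOn_pow (𝕜 := ℝ)).2 (Set.mem_univ (y + z)) (Set.mem_univ (y - z))
    one_half_pos.le one_half_pos.le (add_halves 1)
  simp only [smul_eq_mul] at hconv
  rw [show 1 / 2 * (y + z) + 1 / 2 * (y - z) = y by ring] at hconv
  linarith

lemma second_deriv_powBurkholder_nonpos (hp : Even p) {a b : ℝ} (hab : |b| ≤ |a|) (x y : ℝ) :
    4 * (b ^ 2 * y ^ p) ≤
      ((b + 3 * a) ^ 2 * (y + 3 * x) ^ p + (b - 3 * a) ^ 2 * (y - 3 * x) ^ p) / 2 := by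
  have hsq := sq_le_sq.2 hab
  have habs : |a * b| ≤ a ^ 2 := by
    rw [abs_mul, ← sq_abs a, sq]
    exact mul_le_mul_of_nonneg_left hab (abs_nonneg a)
  have hplus : 4 * b ^ 2 ≤ (b + 3 * a) ^ 2 := by nlinarith [neg_abs_le (a * b)]
  have hminus : 4 * b ^ 2 ≤ (b - 3 * a) ^ 2 := by nlinarith [le_abs_self (a * b)]
  have hconv := mul_le_mul_of_nonneg_left (two_mul_pow_le_add_pow_add_sub_pow hp y (3 * x))
    (sq_nonneg b)
  linarith [mul_le_mul_of_nonneg_right hplus (hp.pow_nonneg (y + 3 * x)),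
    mul_le_mul_of_nonneg_right hminus (hp.pow_nonneg (y - 3 * x))]

lemma hasDerivAt_add_mul_pow (α β : ℝ) (n : ℕ) (t : ℝ) :
    HasDerivAt (fun s => (α + s * β) ^ n) (n * (α + t * β) ^ (n - 1) * β) t := by
  simpa using (((hasDerivAt_id' t).mul_const β).const_add α).fun_pow n

lemma isZigzagConcave_powBurkholder (hp : Even p) : IsZigzagConcave (powBurkholder p) := by
  intro x y a b hab
  have heven : Even (p - 1 - 1) := by
    obtain ⟨k, rfl⟩ := hp
    exact ⟨k - 1, by omega⟩
  let line (q : ℕ) (c₀ c₁ c₂ t : ℝ) : ℝ := 4 * (c₀ * (y + t * b) ^ q) -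
    (c₁ * (y + 3 * x + t * (b + 3 * a)) ^ q + c₂ * (y - 3 * x + t * (b - 3 * a)) ^ q) / 2
  have hderiv : ∀ q c₀ c₁ c₂ t, HasDerivAt (line q c₀ c₁ c₂)
      (q * line (q - 1) (c₀ * b) (c₁ * (b + 3 * a)) (c₂ * (b - 3 * a)) t) t := by
    intro q c₀ c₁ c₂ t
    refine (((hasDerivAt_add_mul_pow y b q t).const_mul c₀ |>.const_mul 4).sub
      ((((hasDerivAt_add_mul_pow (y + 3 * x) (b + 3 * a) q t).const_mul c₁).add
        ((hasDerivAt_add_mul_pow (y - 3 * x) (b - 3 * a) q t).const_mul c₂)).div_const 2))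
          |>.congr_deriv ?_
    ring
  have hconcave : ConcaveOn ℝ Set.univ (line p 1 1 1) := by
    refine concaveOn_of_hasDerivWithinAt2_nonpos convex_univ
      (fun t _ => (hderiv p 1 1 1 t).continuousAt.continuousWithinAt)
      (fun t _ => (hderiv p 1 1 1 t).hasDerivWithinAt)
      (fun t _ => ((hderiv _ _ _ _ t).const_mul _).hasDerivWithinAt) fun t _ => ?_
    have hnonpos := second_deriv_powBurkholder_nonpos (p := p - 1 - 1)
      heven hab (x + t * a) (y + t * b)
    refine mul_nonpos_of_nonneg_of_nonpos p.cast_nonneg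
      (mul_nonpos_of_nonneg_of_nonpos (p - 1).cast_nonneg ?_)
    rw [show y + t * b + 3 * (x + t * a) = y + 3 * x + t * (b + 3 * a) by ring,
      show y + t * b - 3 * (x + t * a) = y - 3 * x + t * (b - 3 * a) by ring] at hnonpos
    change 4 * _ - (_ + _) / 2 ≤ 0
    linarith
  have hmid := hconcave.2 (Set.mem_univ 1) (Set.mem_univ (-1)) one_half_pos.le one_half_pos.le
    (add_halves 1)
  simp only [smul_eq_mul, line] at hmid
  unfold powBurkholder
  ring_nf at hmid ⊢
  linarith

lemma one_add_inv_pow_le_three (p : ℕ) : (1 + 1 / (p : ℝ)) ^ p ≤ 3 := by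
  rcases Nat.eq_zero_or_pos p with rfl | hp
  · norm_num
  calc (1 + 1 / (p : ℝ)) ^ p ≤ Real.exp (1 / p) ^ p := by
        gcongr
        linarith [Real.add_one_le_exp (1 / (p : ℝ))]
    _ = Real.exp 1 := by rw [← Real.exp_nat_mul, mul_one_div_cancel (by positivity)]
    _ ≤ 3 := Real.exp_one_lt_three.le

lemma add_three_mul_pow_le (hp : p ≠ 0) {x y : ℝ} (hx : 0 ≤ x) (hy : 0 ≤ y) :
    (y + 3 * x) ^ p ≤ 3 * y ^ p + (6 * p * x) ^ p := by
  have hp1 : (1 : ℝ) ≤ p := by exact_mod_cast Nat.one_le_iff_ne_zero.2 hp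
  rcases le_total (3 * p * x) y with h | h
  · have hle : y + 3 * x ≤ (1 + 1 / p) * y := by
      have : 3 * x ≤ y / p := by rw [le_div_iff₀ (by positivity)]; linarith
      linarith [show (1 + 1 / (p : ℝ)) * y = y + y / p by ring]
    calc (y + 3 * x) ^ p ≤ (1 + 1 / (p : ℝ)) ^ p * y ^ p := by
          rw [← mul_pow]
          gcongr
      _ ≤ 3 * y ^ p := by gcongr; exact one_add_inv_pow_le_three p
      _ ≤ 3 * y ^ p + (6 * p * x) ^ p := le_add_of_nonneg_right (by positivity)
  · have hle : y + 3 * x ≤ 6 * p * x := by nlinarith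
    calc (y + 3 * x) ^ p ≤ (6 * p * x) ^ p := by gcongr
      _ ≤ 3 * y ^ p + (6 * p * x) ^ p := le_add_of_nonneg_left (by positivity)

lemma pow_sub_le_powBurkholder (hp : Even p) (hp0 : p ≠ 0) (x y : ℝ) :
    |y| ^ p - (6 * p) ^ p * |x| ^ p ≤ powBurkholder p x y := by
  have hplus : (y + 3 * x) ^ p ≤ (|y| + 3 * |x|) ^ p := by
    rw [← hp.pow_abs]
    gcongr
    exact (abs_add_le _ _).trans_eq (by rw [abs_mul, abs_of_pos (three_pos : (0 : ℝ) < 3)])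
  have hminus : (y - 3 * x) ^ p ≤ (|y| + 3 * |x|) ^ p := by
    rw [← hp.pow_abs]
    gcongr
    exact (abs_sub _ _).trans_eq (by rw [abs_mul, abs_of_pos (three_pos : (0 : ℝ) < 3)])
  have hsum := add_three_mul_pow_le hp0 (abs_nonneg x) (abs_nonneg y)
  rw [mul_pow] at hsum
  unfold powBurkholder
  rw [← hp.pow_abs y]
  linarith

lemma powBurkholder_zero_right_nonpos (hp : Even p) (hp0 : p ≠ 0) (x : ℝ) :
    powBurkholder p x 0 ≤ 0 := by
  unfold powBurkholder
  rw [zero_pow hp0]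
  linarith [hp.pow_nonneg (0 + 3 * x), hp.pow_nonneg (0 - 3 * x)]

end PowerBurkholder

/-! ### Strong and weak type bounds -/

section TypeBounds

/-- `T` is bounded on `L^p`, for the uniform probability on the finite type `X`, with norm at
most `C`. -/
def HasStrongType {X : Type*} [Fintype X] (T : (X → ℝ) → X → ℝ) (p : ℕ) (C : ℝ) : Prop :=
  ∀ F, 𝔼 x, |T F x| ^ p ≤ C ^ p * 𝔼 x, |F x| ^ p

/-- `T` is of weak type `(1,1)`, for the uniform probability on the finite type `X`, with constant
at most `C`. -/
def HasWeakType {X : Type*} [Fintype X] (T : (X → ℝ) → X → ℝ) (C : ℝ) : Prop :=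
  ∀ F, ∀ l > 0, 𝔼 x, (if l ≤ |T F x| then (1 : ℝ) else 0) ≤ C / l * 𝔼 x, |F x|

variable {X : Type*} [Fintype X] {S T : (X → ℝ) → X → ℝ} {p : ℕ} {C C' : ℝ}

lemma expect_ite_le_inv_mul_expect {G : X → ℝ} (hG : ∀ x, 0 ≤ G x) {l : ℝ} (hl : 0 < l) :
    𝔼 x, (if l ≤ G x then (1 : ℝ) else 0) ≤ l⁻¹ * 𝔼 x, G x := by
  rw [mul_expect]
  refine expect_le_expect fun x _ => ?_
  split_ifs with h
  · rwa [inv_mul_eq_div, one_le_div₀ hl]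
  · exact mul_nonneg (inv_nonneg.2 hl.le) (hG x)

lemma expect_mul_pow_le (hp : p ≠ 0) {w z : X → ℝ} (hw : ∀ x, 0 ≤ w x) (hz : ∀ x, 0 ≤ z x) :
    (𝔼 x, w x * z x) ^ p ≤ (𝔼 x, w x) ^ (p - 1) * 𝔼 x, w x * z x ^ p := by
  have hp0 : (p : ℝ) ≠ 0 := Nat.cast_ne_zero.2 hp
  have hp1 : 1 ≤ p := Nat.one_le_iff_ne_zero.2 hp
  have hw0 : 0 ≤ 𝔼 x, w x := expect_nonneg fun x _ => hw x
  have hwz0 : 0 ≤ 𝔼 x, w x * z x ^ p :=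
    expect_nonneg fun x _ => mul_nonneg (hw x) (pow_nonneg (hz x) p)
  have hholder := Real.compact_inner_le_weight_mul_Lp_of_nonneg univ (p := p)
    (by exact_mod_cast hp1) hw hz
  simp only [Real.rpow_natCast] at hholder
  refine (pow_le_pow_left₀ (expect_nonneg fun x _ => mul_nonneg (hw x) (hz x))
    hholder p).trans_eq ?_
  rw [mul_pow, ← Real.rpow_natCast, ← Real.rpow_mul hw0, ← Real.rpow_natCast (_ ^ _),
    ← Real.rpow_mul hwz0, inv_mul_cancel₀ hp0, Real.rpow_one, sub_mul, inv_mul_cancel₀ hp0, one_mul,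
    ← Nat.cast_one, ← Nat.cast_sub hp1, Real.rpow_natCast]

namespace HasStrongType

lemma mono (h : HasStrongType T p C) (hC : 0 ≤ C) (hCC' : C ≤ C') : HasStrongType T p C' :=
  fun F => (h F).trans <| mul_le_mul_of_nonneg_right (pow_le_pow_left₀ hC hCC' p) <|
    expect_nonneg fun _ _ => pow_nonneg (abs_nonneg _) p

lemma comp (hS : HasStrongType S p C) (hC : 0 ≤ C) (hT : HasStrongType T p C') :
    HasStrongType (S ∘ T) p (C * C') := fun F => by
  rw [mul_pow, mul_assoc]
  exact (hS _).trans (mul_le_mul_of_nonneg_left (hT F) (pow_nonneg hC p))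

lemma hasWeakType (h : HasStrongType T 1 C) : HasWeakType T C := fun F l hl => by
  have hF := h F
  simp only [pow_one] at hF
  calc 𝔼 x, (if l ≤ |T F x| then (1 : ℝ) else 0) ≤ l⁻¹ * 𝔼 x, |T F x| :=
        expect_ite_le_inv_mul_expect (fun _ => abs_nonneg _) hl
    _ ≤ l⁻¹ * (C * 𝔼 x, |F x|) := mul_le_mul_of_nonneg_left hF (inv_nonneg.2 hl.le)
    _ = C / l * 𝔼 x, |F x| := by ring

lemma weighted_sum {ι : Type*} {s : Finset ι} {c : ι → ℝ} {T : ι → (X → ℝ) → X → ℝ}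
    (hc : ∀ i ∈ s, 0 ≤ c i) (hsum : ∑ i ∈ s, c i = 1) (h : ∀ i ∈ s, HasStrongType (T i) p C) :
    HasStrongType (fun F x => ∑ i ∈ s, c i * T i F x) p C := fun F =>
  calc 𝔼 x, |∑ i ∈ s, c i * T i F x| ^ p ≤ 𝔼 x, ∑ i ∈ s, c i * |T i F x| ^ p := by
        refine expect_le_expect fun x _ => le_trans ?_ <|
          Real.pow_arith_mean_le_arith_mean_pow s c _ hc hsum (fun _ _ => abs_nonneg _) p
        refine pow_le_pow_left₀ (abs_nonneg _) ((abs_sum_le_sum_abs _ _).trans_eq ?_) p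
        exact sum_congr rfl fun i hi => by rw [abs_mul, abs_of_nonneg (hc i hi)]
    _ = ∑ i ∈ s, c i * 𝔼 x, |T i F x| ^ p := by simp only [expect_sum_comm, mul_expect]
    _ ≤ ∑ i ∈ s, c i * (C ^ p * 𝔼 x, |F x| ^ p) :=
        sum_le_sum fun i hi => mul_le_mul_of_nonneg_left (h i hi F) (hc i hi)
    _ = C ^ p * 𝔼 x, |F x| ^ p := by rw [← sum_mul, hsum, one_mul]

end HasStrongType

namespace HasWeakType

lemma mono (h : HasWeakType T C) (hCC' : C ≤ C') : HasWeakType T C' := fun F l hl =>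
  (h F l hl).trans <| mul_le_mul_of_nonneg_right (div_le_div_of_nonneg_right hCC' hl.le) <|
    expect_nonneg fun _ _ => abs_nonneg _

lemma of_one (hT : ∀ (c : ℝ) F x, T (fun t => c * F t) x = c * T F x)
    (h : ∀ F, 𝔼 x, (if 1 ≤ |T F x| then (1 : ℝ) else 0) ≤ C * 𝔼 x, |F x|) : HasWeakType T C :=
  fun F l hl => by
    have hscaled := h fun t => l⁻¹ * F t
    simp only [hT, abs_mul, abs_of_pos (inv_pos.2 hl)] at hscaled
    simp only [inv_mul_eq_div, one_le_div₀ hl, ← expect_div] at hscaled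
    rwa [div_mul_eq_mul_div, mul_div_assoc]

lemma const_mul (h : HasWeakType T C) {c : ℝ} (hc : 0 < c) :
    HasWeakType (fun F x => c * T F x) (c * C) := fun F l hl => by
  have hscaled := h F (l / c) (div_pos hl hc)
  simp only [div_le_iff₀' hc] at hscaled
  simpa only [abs_mul, abs_of_pos hc, div_div_eq_mul_div, mul_comm C c] using hscaled

lemma add (hS : HasWeakType S C) (hT : HasWeakType T C') :
    HasWeakType (fun F x => S F x + T F x) (2 * (C + C')) := fun F l hl => by
  have hsplit : ∀ x, (if l ≤ |S F x + T F x| then (1 : ℝ) else 0) ≤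
      (if l / 2 ≤ |S F x| then 1 else 0) + (if l / 2 ≤ |T F x| then 1 else 0) := fun x => by
    have := abs_add_le (S F x) (T F x)
    split_ifs <;> linarith
  calc 𝔼 x, (if l ≤ |S F x + T F x| then (1 : ℝ) else 0)
      ≤ C / (l / 2) * 𝔼 x, |F x| + C' / (l / 2) * 𝔼 x, |F x| := by
        refine (expect_le_expect fun x _ => hsplit x).trans ?_
        rw [expect_add_distrib]
        exact add_le_add (hS F _ (half_pos hl)) (hT F _ (half_pos hl))
    _ = 2 * (C + C') / l * 𝔼 x, |F x| := by ring

end HasWeakType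

end TypeBounds

section ConvBounds

variable {A p n : ℕ} {κ : (ℕ → ℝ) → ℝ} {C : ℝ} {v : ℕ → ℝ}

lemma hasStrongType_conv_of_kernelNorm_le (hp : p ≠ 0) (h : kernelNorm A κ ≤ C) :
    HasStrongType (conv (A := A) κ) p C := fun F => by
  have hκ : ∀ x : DyadicGroup A, 𝔼 t, |κ (signs (x * t))| = kernelNorm A κ := fun x =>
    expect_mul_left x fun t => |κ (signs t)|
  have hC : 0 ≤ C := (expect_nonneg fun _ _ => abs_nonneg _).trans h
  have hpoint : ∀ x, |conv κ F x| ^ p ≤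
      C ^ (p - 1) * 𝔼 t, |κ (signs (x * t))| * |F t| ^ p := fun x =>
    calc |conv κ F x| ^ p ≤ (𝔼 t, |κ (signs (x * t))| * |F t|) ^ p := by
          gcongr
          simp only [conv, ← abs_mul]
          exact abs_expect_le univ _
      _ ≤ kernelNorm A κ ^ (p - 1) * 𝔼 t, |κ (signs (x * t))| * |F t| ^ p := by
          rw [← hκ x]
          exact expect_mul_pow_le hp (fun _ => abs_nonneg _) fun _ => abs_nonneg _
      _ ≤ C ^ (p - 1) * 𝔼 t, |κ (signs (x * t))| * |F t| ^ p := by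
          gcongr
          exact expect_nonneg fun _ _ => by positivity
  calc 𝔼 x, |conv κ F x| ^ p ≤ 𝔼 x, C ^ (p - 1) * 𝔼 t, |κ (signs (x * t))| * |F t| ^ p :=
        expect_le_expect fun x _ => hpoint x
    _ = C ^ (p - 1) * 𝔼 t, kernelNorm A κ * |F t| ^ p := by
        rw [← mul_expect, expect_comm]
        simp only [← expect_mul, mul_comm _ (_ : DyadicGroup A), hκ]
    _ ≤ C ^ (p - 1) * 𝔼 t, C * |F t| ^ p := by gcongr
    _ = C ^ p * 𝔼 x, |F x| ^ p := by
        rw [← mul_expect, ← mul_assoc, pow_sub_one_mul hp]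

lemma HasStrongType.conv_walshProd_mul (h : HasStrongType (conv (A := A) κ) p C) (n : ℕ) :
    HasStrongType (conv (A := A) fun ρ => walshProd n ρ * κ ρ) p C := fun F => by
  have hunimodular : ∀ x : DyadicGroup A, |walshProd n (signs x)| = 1 := fun x =>
    (isSignSeq_signs x).walshProd.abs_eq_one n
  simpa only [WalshLogMean.conv_walshProd_mul, abs_mul, hunimodular, one_mul] using
    h fun t => walshProd n (signs t) * F t

lemma HasWeakType.conv_walshProd_mul (h : HasWeakType (conv (A := A) κ) C) (n : ℕ) :
    HasWeakType (conv (A := A) fun ρ => walshProd n ρ * κ ρ) C := fun F l hl => by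
  have hunimodular : ∀ x : DyadicGroup A, |walshProd n (signs x)| = 1 := fun x =>
    (isSignSeq_signs x).walshProd.abs_eq_one n
  simpa only [WalshLogMean.conv_walshProd_mul, abs_mul, hunimodular, one_mul] using
    h (fun t => walshProd n (signs t) * F t) l hl

lemma hasWeakType_conv_transformKernel (hC : 0 < C) (hv : ∀ a, |v a| ≤ C) :
    HasWeakType (conv (A := A) (transformKernel A v)) (C * 2) := by
  have hnormalized : ∀ a, |v a / C| ≤ 1 := fun a => by
    rw [abs_div, abs_of_pos hC]
    exact div_le_one_of_le₀ (hv a) hC.le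
  have hscale : transformKernel A v = fun ρ => C * transformKernel A (fun a => v a / C) ρ := by
    ext ρ
    rw [transformKernel, transformKernel, mul_sum]
    exact sum_congr rfl fun a _ => by field_simp
  have hone : HasWeakType (conv (A := A) (transformKernel A fun a => v a / C)) 2 := by
    refine .of_one (conv_const_mul_right _) fun F => ?_
    have hburk := (isZigzagConcave_weakBurkholder.expect_transform_le hnormalized F).trans
      (weakBurkholder_zero_right_nonpos _)
    have hlower := expect_le_expect (s := univ) fun x _ =>
      ite_sub_le_weakBurkholder (F x) (conv (transformKernel A fun a => v a / C) F x)
    rw [expect_sub_distrib, ← mul_expect] at hlower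
    linarith
  have hscaled := hone.const_mul hC
  simp only [← conv_const_mul] at hscaled
  rwa [hscale]

lemma hasStrongType_conv_transformKernel (hp : Even p) (hp0 : p ≠ 0) (hv : ∀ a, |v a| ≤ 1) :
    HasStrongType (conv (A := A) (transformKernel A v)) p (6 * p) := fun F => by
  have hburk := ((isZigzagConcave_powBurkholder hp).expect_transform_le hv F).trans
    (powBurkholder_zero_right_nonpos hp hp0 _)
  have hlower := expect_le_expect (s := univ) fun x _ =>
    pow_sub_le_powBurkholder hp hp0 (F x) (conv (transformKernel A v) F x)
  rw [expect_sub_distrib, ← mul_expect] at hlower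
  linarith

lemma hasStrongType_conv_dirichletSum (hp : Even p) (hp0 : p ≠ 0) (hn : n < 2 ^ A) :
    HasStrongType (conv (A := A) (dirichletSum n)) p (6 * p) := by
  have hv : ∀ a, |bitCoeff 1 n a| ≤ 1 := abs_bitCoeff_le zero_le_one fun _ _ => by simp
  rw [funext (conv_congr (A := A) fun ρ hρ =>
    dirichletSum_eq_walshProd_mul_transformKernel hρ n hn)]
  exact (hasStrongType_conv_transformKernel hp hp0 hv).conv_walshProd_mul n

lemma hasWeakType_conv_norlundSum (hn0 : n ≠ 0) (hn : n < 2 ^ A) :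
    HasWeakType (conv (A := A) (norlundSum n)) (8 * logSum (n + 1)) := by
  have hlog : 0 < logSum (n + 1) := logSum_pos (by omega)
  have hv : ∀ a, |bitCoeff (fun m => logSum (m + 1)) n a| ≤ logSum (n + 1) :=
    abs_bitCoeff_le hlog.le fun m hm => by
      rw [abs_of_nonneg (logSum_succ m ▸ sum_nonneg fun i _ => by positivity)]
      exact logSum_mono (Nat.succ_le_succ hm)
  have hmain := (hasWeakType_conv_transformKernel (A := A) hlog hv).conv_walshProd_mul n
  have herror := (hasStrongType_conv_of_kernelNorm_le one_ne_zero
    (kernelNorm_norlundError_le n hn)).hasWeakType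
  have hsum := hmain.add herror
  simp only [← conv_add, norlundError, add_sub_cancel] at hsum
  exact hsum.mono (by linarith)

end ConvBounds

/-! ### Logarithmic kernels -/

section LogKernel

/-- The kernel of the logarithmic mean `(1 / l_n) ∑_{1 ≤ i < n} S_{k i} / i`: the Nörlund mean for
`k i = n - i`, the Riesz mean for `k i = i`. -/
def logKernel (n : ℕ) (k : ℕ → ℕ) (ρ : ℕ → ℝ) : ℝ :=
  ∑ i ∈ Ico 1 n, 1 / (logSum n * i) * dirichletSum (k i) ρ

variable {A n p : ℕ}

lemma sum_logWeight (hn : 2 ≤ n) : ∑ i ∈ Ico 1 n, 1 / (logSum n * i) = 1 := by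
  have hlog := logSum_pos hn
  calc ∑ i ∈ Ico 1 n, 1 / (logSum n * i) = 1 / logSum n * ∑ i ∈ Ico 1 n, (1 : ℝ) / i := by
        rw [mul_sum]
        exact sum_congr rfl fun i _ => by rw [one_div_mul_one_div]
    _ = 1 := by rw [← logSum_eq_sum_Ico, one_div_mul_cancel hlog.ne']

lemma hasStrongType_conv_logKernel (hp : Even p) (hp0 : p ≠ 0) (hn : 2 ≤ n) {k : ℕ → ℕ}
    (hk : ∀ i ∈ Ico 1 n, k i < 2 ^ A) :
    HasStrongType (conv (A := A) (logKernel n k)) p (6 * p) := by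
  have hlog := logSum_pos hn
  have haverage := HasStrongType.weighted_sum (c := fun i : ℕ => 1 / (logSum n * i))
    (fun i _ => by positivity) (sum_logWeight hn)
    fun i hi => hasStrongType_conv_dirichletSum hp hp0 (hk i hi)
  simp only [← conv_const_mul, ← conv_sum] at haverage
  exact haverage

lemma kernelNorm_rieszKernel_le (hn : 2 ≤ n) (hA : n < 2 ^ A) :
    kernelNorm A (logKernel n id) ≤ 2 := by
  have hlog := logSum_pos hn
  have hshift : ∀ u : ℕ → ℝ, ∑ i ∈ Ico 1 n, 1 / (logSum n * i) * u i =
      ∑ j ∈ range (n - 1), 1 / (logSum n * (j + 1 : ℕ)) * u (j + 1) := fun u => by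
    rw [sum_Ico_eq_sum_range]
    simp only [add_comm 1]
  have hweights := hshift 1
  simp only [Pi.one_apply, mul_one, sum_logWeight hn] at hweights
  have hanti : Antitone fun j : ℕ => 1 / (logSum n * (j + 1 : ℕ)) := fun i j hij =>
    one_div_le_one_div_of_le (by positivity) (by gcongr)
  have hbound := kernelNorm_sum_antitone_mul_dirichletSum_le (A := A) hanti
    (fun j => by positivity) (show n - 1 < 2 ^ A by omega)
  rw [← hweights, mul_one] at hbound
  rwa [show logKernel n id = _ from funext fun ρ => hshift fun i => dirichletSum i ρ]

lemma norlundKernel_eq (n : ℕ) :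
    logKernel n (n - ·) = fun ρ => (logSum n)⁻¹ * norlundSum n ρ := by
  ext ρ
  cases n with
  | zero => simp [logKernel, norlundSum]
  | succ n =>
    rw [logKernel, norlundSum, sum_range_succ, Nat.sub_self, dirichletSum, range_zero, sum_empty,
      zero_div, add_zero, sum_Ico_eq_sum_range, Nat.add_sub_cancel, mul_sum]
    refine sum_congr rfl fun i _ => ?_
    rw [add_comm 1 i, one_div, mul_inv]
    push_cast
    ring

lemma logSum_succ_le_two_mul (hn : 2 ≤ n) : logSum (n + 1) ≤ 2 * logSum n := by
  have hone : 1 ≤ logSum n := by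
    have := logSum_mono hn
    rwa [show logSum 2 = 1 by norm_num [logSum]] at this
  rw [logSum_eq_sum_Ico, sum_Ico_succ_top (by omega), ← logSum_eq_sum_Ico]
  have : (1 : ℝ) / n ≤ 1 := div_le_one_of_le₀ (by exact_mod_cast (by omega)) n.cast_nonneg
  linarith

lemma hasWeakType_conv_norlundKernel (hn : 2 ≤ n) (hA : n < 2 ^ A) :
    HasWeakType (conv (A := A) (logKernel n (n - ·))) 16 := by
  have hlog := logSum_pos hn
  have hscaled := (hasWeakType_conv_norlundSum (by omega) hA).const_mul (inv_pos.2 hlog)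
  rw [norlundKernel_eq]
  simp only [← conv_const_mul] at hscaled
  refine hscaled.mono ?_
  rw [inv_mul_le_iff₀ hlog]
  linarith [logSum_succ_le_two_mul hn]

end LogKernel

/-! ### Tensor products of convolutions -/

section Tensor

variable {ι : Type*} [DecidableEq ι] {A p : ℕ}

/-- Convolution in the `i`-th variable alone. -/
def convAt (i : ι) (κ : (ℕ → ℝ) → ℝ) (F : (ι → DyadicGroup A) → ℝ) (y : ι → DyadicGroup A) : ℝ :=
  conv κ (fun s => F (Function.update y i s)) (y i)

lemma convAt_update (i : ι) (κ : (ℕ → ℝ) → ℝ) (F : (ι → DyadicGroup A) → ℝ)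
    (y : ι → DyadicGroup A) (s : DyadicGroup A) :
    convAt i κ F (Function.update y i s) = conv κ (fun u => F (Function.update y i u)) s := by
  simp only [convAt, Function.update_idem, Function.update_self]

variable [Fintype ι]

/-- Convolution on a power of the dyadic group with the kernel `∏ i, K i (signs (y i))`. -/
def tensorConv (K : ι → (ℕ → ℝ) → ℝ) (F : (ι → DyadicGroup A) → ℝ) (y : ι → DyadicGroup A) : ℝ :=
  𝔼 t, (∏ i, K i (signs (y i * t i))) * F t

lemma expect_mul_tensorConv (K : ι → (ℕ → ℝ) → ℝ) (F G : (ι → DyadicGroup A) → ℝ) :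
    𝔼 y, G y * tensorConv K F y = 𝔼 y, F y * tensorConv K G y := by
  simp only [tensorConv, mul_expect]
  rw [expect_comm]
  refine expect_congr rfl fun t _ => expect_congr rfl fun y _ => ?_
  simp only [mul_comm (y _)]
  ring

lemma tensorConv_sum {κ : Type*} (K : ι → (ℕ → ℝ) → ℝ) (s : Finset κ) (c : κ → ℝ)
    (F : κ → (ι → DyadicGroup A) → ℝ) (y : ι → DyadicGroup A) :
    tensorConv K (fun t => ∑ j ∈ s, c j * F j t) y = ∑ j ∈ s, c j * tensorConv K (F j) y := by
  simp only [tensorConv, mul_sum, expect_sum_comm, mul_expect, mul_left_comm]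

lemma expect_expect_update {X : Type*} [Fintype X] [Nonempty X] (i : ι) (G : (ι → X) → ℝ) :
    𝔼 y, 𝔼 s, G (Function.update y i s) = 𝔼 y, G y := by
  have hswap : Function.Involutive
      fun q : (ι → X) × X => (Function.update q.1 i q.2, q.1 i) := fun q => by simp
  calc 𝔼 y, 𝔼 s, G (Function.update y i s) = 𝔼 q : (ι → X) × X, G (Function.update q.1 i q.2) :=
        (expect_product' univ univ fun y s => G (Function.update y i s)).symm
    _ = 𝔼 q : (ι → X) × X, G q.1 := Fintype.expect_equiv hswap.toPerm _ _ fun _ => rfl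
    _ = 𝔼 y, 𝔼 _s : X, G y := expect_product' univ univ fun y _ => G y
    _ = 𝔼 y, G y := by simp only [Fintype.expect_const]

lemma HasStrongType.convAt {κ : (ℕ → ℝ) → ℝ} {C : ℝ} (h : HasStrongType (conv (A := A) κ) p C)
    (i : ι) : HasStrongType (WalshLogMean.convAt (A := A) i κ) p C := fun F => by
  rw [← expect_expect_update i, ← expect_expect_update i fun y => |F y| ^ p, mul_expect]
  simp only [convAt_update]
  exact expect_le_expect fun y _ => h _

lemma HasWeakType.convAt {κ : (ℕ → ℝ) → ℝ} {C : ℝ} (h : HasWeakType (conv (A := A) κ) C)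
    (i : ι) : HasWeakType (WalshLogMean.convAt (A := A) i κ) C := fun F l hl => by
  rw [← expect_expect_update i, ← expect_expect_update i fun y => |F y|, mul_expect]
  simp only [convAt_update]
  exact expect_le_expect fun y _ => h _ l hl

lemma tensorConv_prod (K : ι → (ℕ → ℝ) → ℝ) (φ : ι → DyadicGroup A → ℝ)
    (y : ι → DyadicGroup A) :
    tensorConv K (fun t => ∏ i, φ i (t i)) y = ∏ i, conv (K i) (φ i) (y i) := by
  simp only [tensorConv, conv, Fintype.expect_eq_sum_div_card, prod_div_distrib, prod_univ_sum,
    Fintype.piFinset_univ, prod_mul_distrib, Fintype.card_pi, Nat.cast_prod]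

lemma tensorConv_dirichletSum_two_pow (F : (ι → DyadicGroup A) → ℝ) (y : ι → DyadicGroup A) :
    tensorConv (fun _ => dirichletSum (2 ^ A)) F y = F y := by
  have hiff : ∀ t : ι → DyadicGroup A, (∀ i, y i = t i) ↔ y = t := fun _ => funext_iff.symm
  rw [tensorConv, Fintype.expect_eq_sum_div_card]
  simp [dirichletSum_two_pow_signs_mul, prod_ite_zero, hiff]

lemma prod_update_kernel (K : ι → (ℕ → ℝ) → ℝ) (i : ι) (κ : (ℕ → ℝ) → ℝ) (ρ : ι → ℕ → ℝ) :
    ∏ j, Function.update K i κ j (ρ j) = κ (ρ i) * ∏ j ∈ univ.erase i, K j (ρ j) := by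
  rw [← mul_prod_erase _ _ (mem_univ i), Function.update_self]
  congr 1
  exact prod_congr rfl fun j hj => by rw [Function.update_of_ne (ne_of_mem_erase hj)]

lemma convAt_tensorConv {K : ι → (ℕ → ℝ) → ℝ} {i : ι} (hK : K i = dirichletSum (2 ^ A))
    (κ : (ℕ → ℝ) → ℝ) :
    convAt i κ ∘ tensorConv (A := A) K = tensorConv (Function.update K i κ) := by
  ext F y
  simp only [Function.comp_apply, convAt, conv, tensorConv, mul_expect]
  rw [expect_comm]
  refine expect_congr rfl fun t _ => ?_
  have hkernel : ∀ s : DyadicGroup A, ∏ j, K j (signs (Function.update y i s j * t j)) =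
      dirichletSum (2 ^ A) (signs (t i * s)) * ∏ j ∈ univ.erase i, K j (signs (y j * t j)) :=
    fun s => by
    rw [← mul_prod_erase _ _ (mem_univ i), hK, Function.update_self, mul_comm s]
    congr 1
    exact prod_congr rfl fun j hj => by rw [Function.update_of_ne (ne_of_mem_erase hj)]
  have hreproduce := congr_fun (conv_dirichletSum_two_pow fun s => κ (signs (y i * s))) (t i)
  rw [prod_update_kernel K i κ fun j => signs (y j * t j), ← hreproduce, conv, expect_mul,
    expect_mul]
  refine expect_congr rfl fun s _ => ?_
  rw [hkernel]
  ring

lemma tensorConv_eq_convAt_comp (K : ι → (ℕ → ℝ) → ℝ) (i : ι) :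
    tensorConv (A := A) K =
      convAt i (K i) ∘ tensorConv (Function.update K i (dirichletSum (2 ^ A))) := by
  rw [convAt_tensorConv (Function.update_self ..), Function.update_idem, Function.update_eq_self]

lemma hasStrongType_tensorConv {K : ι → (ℕ → ℝ) → ℝ} {C : ι → ℝ} (hC : ∀ i, 0 ≤ C i)
    (h : ∀ i, HasStrongType (conv (A := A) (K i)) p (C i)) :
    HasStrongType (tensorConv (A := A) K) p (∏ i, C i) := by
  suffices hpartial : ∀ s : Finset ι, HasStrongType (tensorConv (A := A)
      (s.piecewise K fun _ => dirichletSum (2 ^ A))) p (∏ i ∈ s, C i) by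
    simpa only [piecewise_univ] using hpartial univ
  intro s
  induction s using Finset.induction_on with
  | empty => exact fun F => by simp [tensorConv_dirichletSum_two_pow]
  | insert a s ha ih =>
    rw [piecewise_insert, prod_insert ha,
      ← convAt_tensorConv (piecewise_eq_of_notMem s K _ ha) (K a)]
    exact ((h a).convAt a).comp (hC a) ih

end Tensor

/-! ### Dyadic cells of the unit cube -/

section Digits

variable {A d : ℕ}

/-- The first `A` binary digits of `x`, a digit `b` being recorded as the sign `(-1) ^ b`. -/
def realDigits (A : ℕ) (x : ℝ) : DyadicGroup A := fun k =>
  if Int.fract (2 ^ k.val * x) < 1 / 2 then 1 else -1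

/-- The first `A` binary digits of each coordinate; the fibres are the dyadic cubes of side
`2 ^ (-A)`. -/
def digits (A : ℕ) (x : Fin d → ℝ) : Fin d → DyadicGroup A := fun i => realDigits A (x i)

lemma signs_realDigits {k : ℕ} (hk : k < A) (x : ℝ) :
    signs (realDigits A x) k = rademacher k x := by
  simp only [signs, hk, realDigits, rademacher, r0, dite_true]
  split_ifs <;> simp

lemma walsh_eq_walshProd_realDigits {j : ℕ} (hj : j < 2 ^ A) (x : ℝ) :
    walsh j x = walshProd j (signs (realDigits A x)) :=
  dependsOn_walshProd hj fun _ hk => (signs_realDigits hk x).symm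

lemma floor_two_mul (u : ℝ) : ⌊2 * u⌋ = 2 * ⌊u⌋ + if Int.fract u < 1 / 2 then 0 else 1 := by
  have hu := Int.floor_add_fract u
  have hlt := Int.fract_lt_one u
  have hnonneg := Int.fract_nonneg u
  rw [Int.floor_eq_iff]
  split_ifs <;> push_cast <;> constructor <;> linarith

lemma exists_realDigits_eq_iff_floor_eq (m : DyadicGroup A) :
    ∃ z : ℤ, ∀ x, x ∈ Set.Ico (0 : ℝ) 1 ∧ realDigits A x = m ↔ ⌊2 ^ A * x⌋ = z := by
  induction A with
  | zero => exact ⟨0, fun x => by simp [Int.floor_eq_iff, eq_iff_true_of_subsingleton]⟩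
  | succ A ih =>
    obtain ⟨z, hz⟩ := ih (Fin.init m)
    refine ⟨2 * z + if m (Fin.last A) = 1 then 0 else 1, fun x => ?_⟩
    have hsplit : realDigits (A + 1) x = m ↔ realDigits A x = Fin.init m ∧
        (if Int.fract (2 ^ A * x) < 1 / 2 then 1 else -1) = m (Fin.last A) := by
      rw [funext_iff, funext_iff, Fin.forall_fin_succ']
      rfl
    rw [hsplit, ← and_assoc, hz, pow_succ', mul_assoc, floor_two_mul]
    rcases Int.units_eq_one_or (m (Fin.last A)) with hm | hm <;> rw [hm] <;> split_ifs <;>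
      simp_all <;> omega

lemma exists_realDigits_fiber_eq_Ico (m : DyadicGroup A) :
    ∃ z : ℤ, {x | x ∈ Set.Ico (0 : ℝ) 1 ∧ realDigits A x = m} =
      Set.Ico (z / 2 ^ A : ℝ) ((z + 1) / 2 ^ A) := by
  obtain ⟨z, hz⟩ := exists_realDigits_eq_iff_floor_eq m
  refine ⟨z, Set.ext fun x => (hz x).trans ?_⟩
  rw [Int.floor_eq_iff, Set.mem_Ico, div_le_iff₀' (by positivity), lt_div_iff₀' (by positivity)]

lemma dist_le_of_digits_eq {x y : Fin d → ℝ} (hx : x ∈ unitCube d) (hy : y ∈ unitCube d)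
    (h : digits A x = digits A y) : dist x y ≤ (2 ^ A)⁻¹ := by
  refine (dist_pi_le_iff (by positivity)).2 fun i => ?_
  obtain ⟨z, hz⟩ := exists_realDigits_fiber_eq_Ico (realDigits A (y i))
  have hxi : x i ∈ _ := hz.subset ⟨hx i trivial, congr_fun h i⟩
  have hyi : y i ∈ _ := hz.subset ⟨hy i trivial, rfl⟩
  rw [Set.mem_Ico, add_div, one_div] at hxi hyi
  rw [Real.dist_eq, abs_le]
  constructor <;> linarith

instance : MeasurableSingletonClass ℤˣ :=
  ⟨fun u => ⟨{(u : ℤ)}, measurableSet_singleton _, by ext; simp [Units.ext_iff]⟩⟩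

lemma measurable_digits (A : ℕ) : Measurable (digits (d := d) A) := by
  refine measurable_pi_lambda _ fun i => measurable_pi_lambda _ fun k => ?_
  exact Measurable.ite (measurableSet_lt (by fun_prop) measurable_const) measurable_const
    measurable_const

instance : IsProbabilityMeasure (cubeMeasure d) :=
  ⟨by simp [cubeMeasure, unitCube, Real.volume_pi_Ico]⟩

lemma cubeMeasure_real_digits_fiber (m : Fin d → DyadicGroup A) :
    (cubeMeasure d).real (digits A ⁻¹' {m}) = ((2 ^ A : ℝ) ^ d)⁻¹ := by
  have hcell : digits A ⁻¹' {m} ∩ unitCube d =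
      Set.univ.pi fun i => {x | x ∈ Set.Ico (0 : ℝ) 1 ∧ realDigits A x = m i} := by
    ext x
    exact ⟨fun h i hi => ⟨h.2 i hi, congr_fun h.1 i⟩,
      fun h => ⟨funext fun i => (h i trivial).2, fun i hi => (h i hi).1⟩⟩
  have hside : ∀ i, volume {x | x ∈ Set.Ico (0 : ℝ) 1 ∧ realDigits A x = m i} =
      ENNReal.ofReal (2 ^ A)⁻¹ := fun i => by
    obtain ⟨z, hz⟩ := exists_realDigits_fiber_eq_Ico (m i)
    rw [hz, Real.volume_Ico, ← sub_div, add_sub_cancel_left, one_div]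
  rw [measureReal_def, cubeMeasure,
    Measure.restrict_apply (measurable_digits A (measurableSet_singleton m)), hcell, volume_pi_pi]
  simp only [hside, prod_const, card_univ, Fintype.card_fin, ENNReal.toReal_pow]
  rw [ENNReal.toReal_ofReal (by positivity), inv_pow]

/-- The mean value of `f` over the dyadic cube with digits `m`. -/
def cellAverage (A : ℕ) (f : (Fin d → ℝ) → ℝ) (m : Fin d → DyadicGroup A) : ℝ :=
  ⨍ x in digits A ⁻¹' {m}, f x ∂cubeMeasure d

lemma setIntegral_digits_fiber (f : (Fin d → ℝ) → ℝ) (m : Fin d → DyadicGroup A) :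
    ∫ x in digits A ⁻¹' {m}, f x ∂cubeMeasure d = cellAverage A f m / (2 ^ A) ^ d := by
  rw [cellAverage, setAverage_eq, cubeMeasure_real_digits_fiber, inv_inv, smul_eq_mul,
    mul_div_cancel_left₀ _ (by positivity)]

lemma cellAverage_comp_digits (G : (Fin d → DyadicGroup A) → ℝ) :
    cellAverage A (fun x => G (digits A x)) = G := by
  ext m
  have hcell : Set.EqOn (fun x => G (digits A x)) (fun _ => G m) (digits A ⁻¹' {m}) :=
    fun x hx => congr_arg G hx
  have hvol := cubeMeasure_real_digits_fiber m
  rw [cellAverage, setAverage_eq,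
    setIntegral_congr_fun (measurable_digits A (measurableSet_singleton m)) hcell,
    setIntegral_const, hvol, inv_smul_smul₀ (by positivity)]

lemma cellAverage_add {f g : (Fin d → ℝ) → ℝ} (hf : Integrable f (cubeMeasure d))
    (hg : Integrable g (cubeMeasure d)) (m : Fin d → DyadicGroup A) :
    cellAverage A (f + g) m = cellAverage A f m + cellAverage A g m := by
  simp only [cellAverage, setAverage_eq, Pi.add_apply,
    integral_add hf.integrableOn hg.integrableOn, smul_add]

lemma integral_mul_comp_digits {f : (Fin d → ℝ) → ℝ} (hf : Integrable f (cubeMeasure d))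
    (G : (Fin d → DyadicGroup A) → ℝ) :
    ∫ x, f x * G (digits A x) ∂cubeMeasure d = 𝔼 m, cellAverage A f m * G m := by
  have hfiber : ∀ m : Fin d → DyadicGroup A, MeasurableSet (digits A ⁻¹' {m}) := fun m =>
    measurable_digits A (measurableSet_singleton m)
  have hcells : ∀ x, f x * G (digits A x) =
      ∑ m, G m * (digits A ⁻¹' {m}).indicator f x := fun x => by
    classical simp [Set.indicator_apply, mul_comm]
  simp only [hcells]
  rw [integral_finsetSum _ fun m _ => (hf.indicator (hfiber m)).const_mul _,
    Fintype.expect_eq_sum_div_card, sum_div]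
  refine sum_congr rfl fun m _ => ?_
  rw [integral_const_mul, integral_indicator (hfiber m), setIntegral_digits_fiber]
  simp [mul_comm, mul_div_assoc]

lemma integral_comp_digits (G : (Fin d → DyadicGroup A) → ℝ) :
    ∫ x, G (digits A x) ∂cubeMeasure d = 𝔼 m, G m := by
  have h := integral_mul_comp_digits (d := d) (integrable_const 1) G
  simpa only [one_mul, cellAverage_comp_digits fun _ => (1 : ℝ)] using h

lemma integrable_mul_comp_digits {h : (Fin d → ℝ) → ℝ} (hh : Integrable h (cubeMeasure d))
    (G : (Fin d → DyadicGroup A) → ℝ) :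
    Integrable (fun x => h x * G (digits A x)) (cubeMeasure d) :=
  hh.mul_bdd (c := ∑ m, |G m|)
    ((measurable_of_finite G).comp (measurable_digits A)).aestronglyMeasurable <|
    .of_forall fun x =>
      single_le_sum (f := fun m => |G m|) (fun _ _ => abs_nonneg _) (mem_univ (digits A x))

lemma integrable_comp_digits (G : (Fin d → DyadicGroup A) → ℝ) :
    Integrable (fun x => G (digits A x)) (cubeMeasure d) := by
  simpa only [one_mul] using integrable_mul_comp_digits (integrable_const 1) G

lemma cubeMeasure_real_setOf_digits (P : (Fin d → DyadicGroup A) → Prop) [DecidablePred P] :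
    (cubeMeasure d).real {x | P (digits A x)} = 𝔼 m, if P m then (1 : ℝ) else 0 := by
  have hmeas : MeasurableSet {x : Fin d → ℝ | P (digits A x)} :=
    measurable_digits A (Set.toFinite {m | P m}).measurableSet
  rw [← integral_comp_digits fun m => if P m then (1 : ℝ) else 0, ← integral_indicator_one hmeas]
  simp only [Set.indicator_apply, Set.mem_ofPred_eq, Pi.one_apply]

lemma expect_cellAverage_sq_le {g : (Fin d → ℝ) → ℝ} (hg : Integrable g (cubeMeasure d))
    (hg2 : Integrable (fun x => g x ^ 2) (cubeMeasure d)) :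
    𝔼 m, cellAverage A g m ^ 2 ≤ ∫ x, g x ^ 2 ∂cubeMeasure d := by
  set P := fun x => cellAverage A g (digits A x)
  have hPsq : ∫ x, P x ^ 2 ∂cubeMeasure d = 𝔼 m, cellAverage A g m ^ 2 :=
    integral_comp_digits fun m => cellAverage A g m ^ 2
  have hgP : ∫ x, g x * P x ∂cubeMeasure d = 𝔼 m, cellAverage A g m ^ 2 := by
    simp only [P, integral_mul_comp_digits hg, pow_two]
  have hP2 : Integrable (fun x => P x ^ 2) (cubeMeasure d) :=
    integrable_comp_digits fun m => cellAverage A g m ^ 2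
  have hgPi : Integrable (fun x => g x * P x) (cubeMeasure d) :=
    integrable_mul_comp_digits hg (cellAverage A g)
  have horth : 0 ≤ ∫ x, (g x - P x) ^ 2 ∂cubeMeasure d := integral_nonneg fun _ => sq_nonneg _
  have hexpand : ∀ x, (g x - P x) ^ 2 = g x ^ 2 - 2 * (g x * P x) + P x ^ 2 := fun x => by ring
  simp only [hexpand] at horth
  rw [integral_add (f := fun x => g x ^ 2 - 2 * (g x * P x)) (hg2.sub (hgPi.const_mul 2)) hP2,
    integral_sub hg2 (hgPi.const_mul 2), integral_const_mul, hPsq, hgP] at horth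
  linarith

end Digits

section MixedMeans

variable {A d : ℕ}

/-- The kernel in the `j`-th variable of the mixed mean: Nörlund for `j ∈ B`, Riesz otherwise. -/
def meanKernel (B : Finset (Fin d)) (n : Fin d → ℕ) (j : Fin d) : (ℕ → ℝ) → ℝ :=
  logKernel (n j) fun i => if j ∈ B then n j - i else i

variable {f g : (Fin d → ℝ) → ℝ}

lemma walshCoef_eq_expect (hf : Integrable f (cubeMeasure d)) {j : Fin d → ℕ}
    (hj : ∀ i, j i < 2 ^ A) :
    walshCoef f j = 𝔼 m, cellAverage A f m * ∏ i, walshProd (j i) (signs (m i)) := by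
  simp only [walshCoef, walsh_eq_walshProd_realDigits (hj _)]
  exact integral_mul_comp_digits hf fun m => ∏ i, walshProd (j i) (signs (m i))

lemma rectPartialSum_eq_tensorConv (hf : Integrable f (cubeMeasure d)) {N : Fin d → ℕ}
    (hN : ∀ i, N i ≤ 2 ^ A) (x : Fin d → ℝ) :
    rectPartialSum f N x =
      tensorConv (fun i => dirichletSum (N i)) (cellAverage A f) (digits A x) := by
  simp only [rectPartialSum, tensorConv, dirichletSum, prod_univ_sum, sum_mul, expect_sum_comm]
  refine sum_congr rfl fun j hj => ?_
  have hj' : ∀ i, j i < 2 ^ A := fun i =>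
    (mem_range.1 (Fintype.mem_piFinset.1 hj i)).trans_le (hN i)
  simp only [walshCoef_eq_expect hf hj', expect_mul, walsh_eq_walshProd_realDigits (hj' _),
    signs_mul, walshProd_mul, prod_mul_distrib, digits]
  exact expect_congr rfl fun t _ => by ring

lemma mixedLogMean_eq_tensorConv (B : Finset (Fin d)) (hf : Integrable f (cubeMeasure d))
    {n : Fin d → ℕ} (hn : ∀ j, n j ≤ 2 ^ A) (x : Fin d → ℝ) :
    mixedLogMean B f n x = tensorConv (meanKernel B n) (cellAverage A f) (digits A x) := by
  simp only [mixedLogMean, tensorConv, meanKernel, logKernel, prod_univ_sum, sum_mul,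
    expect_sum_comm, mul_sum]
  refine sum_congr rfl fun i hi => ?_
  have hi' : ∀ j, (if j ∈ B then n j - i j else i j) ≤ 2 ^ A := fun j => by
    have := mem_Ico.1 (Fintype.mem_piFinset.1 hi j)
    have := hn j
    split_ifs <;> omega
  rw [rectPartialSum_eq_tensorConv hf hi', tensorConv]
  simp only [prod_mul_distrib, mul_assoc, ← mul_expect, one_div, mul_inv, prod_inv_distrib]
  ring

lemma exists_ge_forall_lt_two_pow (n : Fin d → ℕ) (A₀ : ℕ) : ∃ A ≥ A₀, ∀ j, n j < 2 ^ A := by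
  refine ⟨A₀ + ∑ j, n j, Nat.le_add_right _ _, fun j => lt_of_le_of_lt ?_ Nat.lt_two_pow_self⟩
  exact (single_le_sum (fun _ _ => Nat.zero_le _) (mem_univ j)).trans (Nat.le_add_left _ _)

lemma mixedLogMean_add (B : Finset (Fin d)) (hf : Integrable f (cubeMeasure d))
    (hg : Integrable g (cubeMeasure d)) (n : Fin d → ℕ) (x : Fin d → ℝ) :
    mixedLogMean B (f + g) n x = mixedLogMean B f n x + mixedLogMean B g n x := by
  obtain ⟨A, -, hA⟩ := exists_ge_forall_lt_two_pow n 0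
  have hA' : ∀ j, n j ≤ 2 ^ A := fun j => (hA j).le
  simp only [mixedLogMean_eq_tensorConv B (hf.add hg) hA', mixedLogMean_eq_tensorConv B hf hA',
    mixedLogMean_eq_tensorConv B hg hA', tensorConv, cellAverage_add hf hg, mul_add,
    expect_add_distrib]

end MixedMeans

/-! ### Moments of polynomial growth and the class `L log^k L` -/

section Young

/-- `e` times the bound `D * r ^ k` for the norm in `L ^ (2 * r)` of the function paired with a
function in `L log^k L`. -/
def youngScale (D : ℝ) (k r : ℕ) : ℝ := Real.exp 1 * (D * (r : ℝ) ^ k)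

/-- The part of Young's inequality, at the level `exp r`, that is controlled by the moment of order
`2 * r`. -/
def youngTerm (D : ℝ) (k r : ℕ) (β : ℝ) : ℝ :=
  Real.exp r * youngScale D k r * (|β| / youngScale D k r) ^ (2 * r)

variable {D : ℝ}

lemma youngScale_nonneg (hD : 0 < D) (k r : ℕ) : 0 ≤ youngScale D k r := by
  unfold youngScale; positivity

lemma youngScale_pos (hD : 0 < D) (k : ℕ) {r : ℕ} (hr : 1 ≤ r) : 0 < youngScale D k r := by
  have : (0 : ℝ) < r := by exact_mod_cast hr
  unfold youngScale; positivity

lemma youngTerm_nonneg (hD : 0 < D) (k r : ℕ) (β : ℝ) : 0 ≤ youngTerm D k r β := by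
  have := youngScale_nonneg hD k r
  unfold youngTerm; positivity

lemma youngScale_ceil_le (hD : 0 < D) (k : ℕ) {u : ℝ} (hu : 1 ≤ u) :
    youngScale D k ⌈u⌉₊ ≤ Real.exp 1 * D * 2 ^ k * (1 + u ^ k) := by
  have hceil : (⌈u⌉₊ : ℝ) ≤ 2 * u := by linarith [Nat.ceil_lt_add_one (zero_le_one.trans hu)]
  calc youngScale D k ⌈u⌉₊ ≤ Real.exp 1 * (D * (2 * u) ^ k) := by unfold youngScale; gcongr
    _ = Real.exp 1 * D * 2 ^ k * u ^ k := by ring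
    _ ≤ Real.exp 1 * D * 2 ^ k * (1 + u ^ k) := by gcongr; linarith

lemma le_one_add_pow {x : ℝ} (hx : 0 ≤ x) {m : ℕ} (hm : m ≠ 0) : x ≤ 1 + x ^ m := by
  rcases le_total x 1 with h | h
  · linarith [pow_nonneg hx m]
  · linarith [le_self_pow₀ h hm]

-- The level is `r = ⌈log (1 + a)⌉`, for which both `a ≤ exp r` and `r ≤ 2 * log (1 + a)`.
lemma exists_mul_abs_le_add_youngTerm (hD : 0 < D) (k : ℕ) {R : ℕ} (hR : 1 ≤ R) {a : ℝ}
    (ha : Real.exp R ≤ a) (β : ℝ) :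
    ∃ r ≥ R, a * |β| ≤
      Real.exp 1 * D * 2 ^ k * (a * (1 + Real.log (1 + a) ^ k)) + youngTerm D k r β := by
  have ha0 : 0 < a := (Real.exp_pos _).trans_le ha
  have hRu : (R : ℝ) ≤ Real.log (1 + a) := by
    rw [Real.le_log_iff_exp_le (by linarith)]; linarith
  have hu : 1 ≤ Real.log (1 + a) := le_trans (by exact_mod_cast hR) hRu
  have hscale := youngScale_ceil_le hD k hu
  set r := ⌈Real.log (1 + a)⌉₊
  have hur : Real.log (1 + a) ≤ r := Nat.le_ceil _
  have hRr : R ≤ r := by exact_mod_cast hRu.trans hur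
  have har : a ≤ Real.exp r := by
    rw [Real.log_le_iff_le_exp (by linarith)] at hur; linarith
  have hP : 0 < youngScale D k r := youngScale_pos hD k (hR.trans hRr)
  refine ⟨r, hRr, ?_⟩
  calc a * |β| = a * youngScale D k r * (|β| / youngScale D k r) := by field_simp
    _ ≤ a * youngScale D k r * (1 + (|β| / youngScale D k r) ^ (2 * r)) := by
        gcongr; exact le_one_add_pow (by positivity) (by omega)
    _ = a * youngScale D k r + a * youngScale D k r * (|β| / youngScale D k r) ^ (2 * r) := by
        ring
    _ ≤ a * (Real.exp 1 * D * 2 ^ k * (1 + Real.log (1 + a) ^ k)) + youngTerm D k r β := by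
        unfold youngTerm; gcongr
    _ = _ := by ring

variable {X : Type*} [Fintype X] {k : ℕ} {b : X → ℝ}

/-- All even moments of `b`, for the uniform probability on the finite type `X`, satisfy
`‖b‖_{2r} ≤ D * r ^ k`. -/
def HasMomentGrowth (D : ℝ) (k : ℕ) (b : X → ℝ) : Prop :=
  ∀ r : ℕ, 1 ≤ r → 𝔼 y, |b y| ^ (2 * r) ≤ (D * (r : ℝ) ^ k) ^ (2 * r)

/-- The bound for the mean of `youngTerm D k r` under the moment growth of order `k`. -/
def youngMean (D : ℝ) (k r : ℕ) : ℝ := Real.exp 1 * D * ((r : ℝ) ^ k * Real.exp (-1) ^ r)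

lemma summable_youngMean (D : ℝ) (k : ℕ) : Summable (youngMean D k) := by
  suffices hexp : ‖Real.exp (-1)‖ < 1 from
    (summable_pow_mul_geometric_of_norm_lt_one k hexp).mul_left (Real.exp 1 * D)
  rw [Real.norm_eq_abs, abs_of_pos (Real.exp_pos _), Real.exp_lt_one_iff]
  norm_num

lemma expect_youngTerm_le (hD : 0 < D) (hb : HasMomentGrowth D k b) {r : ℕ} (hr : 1 ≤ r) :
    𝔼 y, youngTerm D k r (b y) ≤ youngMean D k r := by
  have hP := youngScale_pos hD k hr
  have : (0 : ℝ) < r := by exact_mod_cast hr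
  have hexp : Real.exp r = Real.exp 1 ^ r := by rw [← Real.exp_nat_mul, mul_one]
  have hterm : ∀ y, youngTerm D k r (b y) =
      Real.exp r * youngScale D k r / youngScale D k r ^ (2 * r) * |b y| ^ (2 * r) := fun y => by
    unfold youngTerm; rw [div_pow]; ring
  simp only [hterm, ← mul_expect]
  calc _ ≤ Real.exp r * youngScale D k r / youngScale D k r ^ (2 * r) *
        (D * (r : ℝ) ^ k) ^ (2 * r) := by gcongr; exact hb r hr
    _ = youngMean D k r := by
        rw [hexp, youngMean, Real.exp_neg, inv_pow, youngScale, mul_pow (Real.exp 1), two_mul r,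
          pow_add (Real.exp 1)]
        field_simp

variable [Nonempty X]

lemma summable_youngTerm (hD : 0 < D) (hb : HasMomentGrowth D k b) {R : ℕ} (hR : 1 ≤ R) (y : X) :
    Summable fun j => youngTerm D k (j + R) (b y) := by
  refine .of_nonneg_of_le (fun j => youngTerm_nonneg hD k _ _) (fun j => ?_)
    (((summable_nat_add_iff R).2 (summable_youngMean D k)).mul_left (Fintype.card X : ℝ))
  have hcard : (0 : ℝ) < Fintype.card X := by exact_mod_cast Fintype.card_pos
  have hmean := expect_youngTerm_le hD hb (show 1 ≤ j + R by omega)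
  rw [Fintype.expect_eq_sum_div_card, div_le_iff₀' hcard] at hmean
  exact (single_le_sum (f := fun y => youngTerm D k (j + R) (b y))
    (fun _ _ => youngTerm_nonneg hD k _ _) (mem_univ y)).trans hmean

lemma expect_tsum_youngTerm_le (hD : 0 < D) (hb : HasMomentGrowth D k b) {R : ℕ} (hR : 1 ≤ R) :
    𝔼 y, ∑' j, youngTerm D k (j + R) (b y) ≤ ∑' j, youngMean D k (j + R) := by
  have hle : ∀ j, 𝔼 y, youngTerm D k (j + R) (b y) ≤ youngMean D k (j + R) := fun j =>
    expect_youngTerm_le hD hb (by omega)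
  have hmean : Summable fun j => youngMean D k (j + R) :=
    (summable_nat_add_iff R).2 (summable_youngMean D k)
  have hswap : 𝔼 y, ∑' j, youngTerm D k (j + R) (b y) =
      ∑' j, 𝔼 y, youngTerm D k (j + R) (b y) := by
    simp only [Fintype.expect_eq_sum_div_card, tsum_div_const]
    rw [Summable.tsum_finsetSum fun y _ => summable_youngTerm hD hb hR y]
  rw [hswap]
  exact Summable.tsum_le_tsum hle (.of_nonneg_of_le
    (fun j => expect_nonneg fun y _ => youngTerm_nonneg hD k _ _) hle hmean) hmean

end Young

section HighPart

/-- The restriction of `f` to the set where its absolute value exceeds `M`. -/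
def highPart {α : Type*} (M : ℝ) (f : α → ℝ) : α → ℝ := {x | M < |f x|}.indicator f

lemma measurableSet_lt_abs {α : Type*} [MeasurableSpace α] {f : α → ℝ} (hf : Measurable f)
    (M : ℝ) : MeasurableSet {x | M < |f x|} :=
  measurableSet_lt measurable_const hf.abs

lemma tendsto_setIntegral_lt_abs {α : Type*} [MeasurableSpace α] {μ : Measure α} {f φ : α → ℝ}
    (hf : Measurable f) (hφ : Integrable φ μ) :
    Tendsto (fun M : ℕ => ∫ x in {x | (M : ℝ) < |f x|}, φ x ∂μ) atTop (nhds 0) := by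
  have hanti : Antitone fun M : ℕ => {x | (M : ℝ) < |f x|} := fun M N hMN x hx =>
    show (M : ℝ) < |f x| from (Nat.cast_le.2 hMN).trans_lt hx
  have hempty : ⋂ M : ℕ, {x | (M : ℝ) < |f x|} = ∅ := by
    ext x
    obtain ⟨M, hM⟩ := exists_nat_ge |f x|
    simpa using ⟨M, hM⟩
  have h := tendsto_setIntegral_of_antitone (fun M : ℕ => measurableSet_lt_abs hf M) hanti
    ⟨0, hφ.integrableOn⟩
  rwa [hempty, setIntegral_empty] at h

variable {d A k : ℕ} {f : (Fin d → ℝ) → ℝ} {D : ℝ}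

lemma integrable_highPart (hf : Measurable f) (hfi : Integrable f (cubeMeasure d)) (M : ℝ) :
    Integrable (highPart M f) (cubeMeasure d) :=
  hfi.indicator (measurableSet_lt_abs hf M)

lemma highPart_mul_le (hD : 0 < D) {b : (Fin d → DyadicGroup A) → ℝ} (hb : HasMomentGrowth D k b)
    {R : ℕ} (hR : 1 ≤ R) {M : ℝ} (hM : Real.exp R ≤ M) (x : Fin d → ℝ) :
    highPart M f x * b (digits A x) ≤
      {x | M < |f x|}.indicator (fun x => Real.exp 1 * D * 2 ^ k *
        (|f x| * (1 + Real.log (1 + |f x|) ^ k))) x +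
      ∑' j, youngTerm D k (j + R) (b (digits A x)) := by
  by_cases hx : x ∈ {x | M < |f x|}
  · have hMx : M < |f x| := hx
    obtain ⟨r, hr, hyoung⟩ := exists_mul_abs_le_add_youngTerm hD k hR (hM.trans hMx.le)
      (b (digits A x))
    have hterm : youngTerm D k r (b (digits A x)) ≤
        ∑' j, youngTerm D k (j + R) (b (digits A x)) := by
      have h := (summable_youngTerm hD hb hR (digits A x)).le_tsum (r - R)
        fun j _ => youngTerm_nonneg hD k _ _
      rwa [Nat.sub_add_cancel hr] at h
    have habs : f x * b (digits A x) ≤ |f x| * |b (digits A x)| := by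
      rw [← abs_mul]; exact le_abs_self _
    rw [highPart, Set.indicator_of_mem hx, Set.indicator_of_mem hx]
    linarith
  · rw [highPart, Set.indicator_of_notMem hx, Set.indicator_of_notMem hx, zero_mul, zero_add]
    exact tsum_nonneg fun j => youngTerm_nonneg hD k _ _

theorem eventually_integral_highPart_mul_le (hf : Measurable f) (hfi : Integrable f (cubeMeasure d))
    (hfl : Integrable (fun x => |f x| * Real.log (1 + |f x|) ^ k) (cubeMeasure d))
    (hD : 0 < D) {η : ℝ} (hη : 0 < η) :
    ∀ᶠ M : ℕ in atTop, ∀ (A : ℕ) (b : (Fin d → DyadicGroup A) → ℝ), HasMomentGrowth D k b →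
      ∫ x, highPart M f x * b (digits A x) ∂(cubeMeasure d) ≤ η := by
  set φ : (Fin d → ℝ) → ℝ := fun x =>
    Real.exp 1 * D * 2 ^ k * (|f x| * (1 + Real.log (1 + |f x|) ^ k)) with hφ
  have hφi : Integrable φ (cubeMeasure d) := by
    simp only [hφ, mul_add, mul_one]
    exact (hfi.abs.const_mul _).add (hfl.const_mul _)
  obtain ⟨R, htail, hR⟩ := (((tendsto_sum_nat_add (youngMean D k)).eventually
    (gt_mem_nhds (half_pos hη))).and (eventually_ge_atTop 1)).exists
  filter_upwards [(tendsto_setIntegral_lt_abs hf hφi).eventually (gt_mem_nhds (half_pos hη)),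
    tendsto_natCast_atTop_atTop.eventually_ge_atTop (Real.exp R)] with M hφM hRM A b hb
  set V : (Fin d → DyadicGroup A) → ℝ := fun y => ∑' j, youngTerm D k (j + R) (b y)
  have hφM_int : Integrable ({x | (M : ℝ) < |f x|}.indicator φ) (cubeMeasure d) :=
    hφi.indicator (measurableSet_lt_abs hf M)
  calc _ ≤ ∫ x, ({x | (M : ℝ) < |f x|}.indicator φ x + V (digits A x)) ∂(cubeMeasure d) :=
        integral_mono (integrable_mul_comp_digits (integrable_highPart hf hfi M) b)
          (hφM_int.add (integrable_comp_digits V)) (highPart_mul_le hD hb hR hRM)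
    _ = ∫ x in {x | (M : ℝ) < |f x|}, φ x ∂(cubeMeasure d) + 𝔼 y, V y := by
        rw [integral_add hφM_int (integrable_comp_digits V), integral_comp_digits,
          integral_indicator (measurableSet_lt_abs hf M)]
    _ ≤ η := by linarith [expect_tsum_youngTerm_le hD hb hR]

end HighPart

/-! ### Distributional bounds for the mixed means -/

section Bounds

variable {d A p : ℕ} {B : Finset (Fin d)} {n : Fin d → ℕ} {f : (Fin d → ℝ) → ℝ}

lemma hasStrongType_conv_meanKernel (hp : Even p) (hp0 : p ≠ 0) (hn : ∀ j, 2 ≤ n j)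
    (hA : ∀ j, n j < 2 ^ A) (j : Fin d) :
    HasStrongType (conv (A := A) (meanKernel B n j)) p (6 * p) :=
  hasStrongType_conv_logKernel hp hp0 (hn j) fun i hi => by
    have hi := mem_Ico.1 hi
    have := hA j
    split_ifs <;> omega

lemma hasStrongType_conv_meanKernel_of_notMem (hp0 : p ≠ 0) (hn : ∀ j, 2 ≤ n j)
    (hA : ∀ j, n j < 2 ^ A) {j : Fin d} (hj : j ∉ B) :
    HasStrongType (conv (A := A) (meanKernel B n j)) p 2 := by
  simp only [meanKernel, if_neg hj]
  exact hasStrongType_conv_of_kernelNorm_le hp0 (kernelNorm_rieszKernel_le (hn j) (hA j))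

lemma hasWeakType_conv_meanKernel (hn : ∀ j, 2 ≤ n j) (hA : ∀ j, n j < 2 ^ A) {j : Fin d}
    (hj : j ∈ B) : HasWeakType (conv (A := A) (meanKernel B n j)) 16 := by
  simp only [meanKernel, if_pos hj]
  exact hasWeakType_conv_norlundKernel (hn j) (hA j)

lemma hasMomentGrowth_tensorConv_meanKernel (hn : ∀ j, 2 ≤ n j) (hA : ∀ j, n j < 2 ^ A)
    (j : Fin d) {G : (Fin d → DyadicGroup A) → ℝ} (hG : ∀ y, |G y| ≤ 1) :
    HasMomentGrowth (12 ^ #(B.erase j) * 2 ^ #(B.erase j)ᶜ) #(B.erase j)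
      (tensorConv (Function.update (meanKernel B n) j (dirichletSum (2 ^ A))) G) := by
  intro r hr
  have hr0 : 2 * r ≠ 0 := by omega
  set C : Fin d → ℝ := fun i => if i ∈ B.erase j then 12 * r else 2 with hC
  have hprod : ∏ i, C i = 12 ^ #(B.erase j) * 2 ^ #(B.erase j)ᶜ * (r : ℝ) ^ #(B.erase j) := by
    rw [hC, prod_ite, prod_const, prod_const, filter_univ_mem, filter_notMem_eq_sdiff,
      ← compl_eq_univ_sdiff, mul_pow]
    ring
  have hK : ∀ i, HasStrongType (conv (A := A)
      (Function.update (meanKernel B n) j (dirichletSum (2 ^ A)) i)) (2 * r) (C i) := fun i => by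
    rcases eq_or_ne i j with rfl | hij
    · have hid : HasStrongType (conv (A := A) (dirichletSum (2 ^ A))) (2 * r) 1 := fun F => by
        rw [conv_dirichletSum_two_pow, one_pow, one_mul]
      simpa [hC] using hid.mono zero_le_one one_le_two
    · rw [Function.update_of_ne hij]
      by_cases hi : i ∈ B
      · have hstrong := hasStrongType_conv_meanKernel (B := B) (even_two_mul r) hr0 hn hA i
        simpa [hC, hi, hij, ← mul_assoc, show (6 * 2 : ℝ) = 12 by norm_num] using hstrong
      · simpa [hC, hi] using hasStrongType_conv_meanKernel_of_notMem hr0 hn hA hi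
  have hGr : 𝔼 y, |G y| ^ (2 * r) ≤ 1 :=
    (expect_le_expect fun y _ => pow_le_one₀ (abs_nonneg _) (hG y)).trans
      (Fintype.expect_const 1).le
  have hC0 : ∀ i, 0 ≤ C i := fun i => by simp only [hC]; split_ifs <;> positivity
  rw [← hprod]
  exact (hasStrongType_tensorConv hC0 hK G).trans
    (mul_le_of_le_one_right ((even_two_mul r).pow_nonneg _) hGr)

lemma abs_sign_le_one (a : ℝ) : |(SignType.sign a : ℝ)| ≤ 1 := by
  rcases lt_trichotomy a 0 with h | h | h <;> simp [h]

lemma expect_abs_tensorConv_cellAverage (hf : Integrable f (cubeMeasure d))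
    (K : Fin d → (ℕ → ℝ) → ℝ) :
    𝔼 y, |tensorConv K (cellAverage A f) y| =
      ∫ x, f x * tensorConv K (fun y => SignType.sign (tensorConv K (cellAverage A f) y))
        (digits A x) ∂cubeMeasure d := by
  simp only [integral_mul_comp_digits hf, ← expect_mul_tensorConv, sign_mul_self]

-- In the direction of one index of `B` only the weak type bound of the Nörlund kernel is used. The
-- other directions act on a bounded function by duality, and each index of `B` contributes a factor
-- `r` to its moment of order `2 * r`.
theorem eventually_mixedLogMean_highPart_le (hB : B.Nonempty) (hf : Measurable f)
    (hfi : Integrable f (cubeMeasure d))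
    (hfl : Integrable (fun x => |f x| * Real.log (1 + |f x|) ^ (#B - 1)) (cubeMeasure d))
    {l η : ℝ} (hl : 0 < l) (hη : 0 < η) :
    ∀ᶠ M : ℕ in atTop, ∀ n : Fin d → ℕ, (∀ j, 2 ≤ n j) →
      (cubeMeasure d).real {x | l ≤ |mixedLogMean B (highPart M f) n x|} ≤ η := by
  obtain ⟨i, hi⟩ := hB
  rw [← card_erase_of_mem hi] at hfl
  filter_upwards [eventually_integral_highPart_mul_le hf hfi hfl
    (D := 12 ^ #(B.erase i) * 2 ^ #(B.erase i)ᶜ) (by positivity)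
    (show 0 < l * η / 16 by positivity)] with M hM n hn
  have hfM := integrable_highPart hf hfi M
  obtain ⟨A, -, hA⟩ := exists_ge_forall_lt_two_pow n 0
  set K := Function.update (meanKernel B n) i (dirichletSum (2 ^ A))
  set S := tensorConv K (cellAverage A (highPart M f))
  have hS : 𝔼 y, |S y| ≤ l * η / 16 := by
    rw [expect_abs_tensorConv_cellAverage hfM]
    exact hM A _ (hasMomentGrowth_tensorConv_meanKernel hn hA i fun _ => abs_sign_le_one _)
  have hmean : ∀ x, mixedLogMean B (highPart M f) n x =
      convAt i (meanKernel B n i) S (digits A x) := fun x => by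
    rw [mixedLogMean_eq_tensorConv B hfM (fun j => (hA j).le), tensorConv_eq_convAt_comp _ i]
    rfl
  simp only [hmean]
  rw [cubeMeasure_real_setOf_digits fun y => l ≤ |convAt i (meanKernel B n i) S y|]
  calc _ ≤ 16 / l * 𝔼 y, |S y| := (hasWeakType_conv_meanKernel hn hA hi).convAt i S l hl
    _ ≤ 16 / l * (l * η / 16) := by gcongr
    _ = η := by field_simp

lemma cubeMeasure_le_abs_mixedLogMean_le (B : Finset (Fin d)) {g : (Fin d → ℝ) → ℝ}
    (hg : Integrable g (cubeMeasure d)) (hg2 : Integrable (fun x => g x ^ 2) (cubeMeasure d))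
    (hn : ∀ j, 2 ≤ n j) {l : ℝ} (hl : 0 < l) :
    (cubeMeasure d).real {x | l ≤ |mixedLogMean B g n x|} ≤
      (l ^ 2)⁻¹ * ((12 ^ d) ^ 2 * ∫ x, g x ^ 2 ∂cubeMeasure d) := by
  obtain ⟨A, -, hA⟩ := exists_ge_forall_lt_two_pow n 0
  set T := tensorConv (meanKernel B n) (cellAverage A g)
  have hkernel : ∀ i, HasStrongType (conv (A := A) (meanKernel B n i)) 2 12 := fun i => by
    convert hasStrongType_conv_meanKernel even_two two_ne_zero hn hA i using 1
    norm_num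
  have hstrong : 𝔼 y, T y ^ 2 ≤ (12 ^ d) ^ 2 * 𝔼 y, cellAverage A g y ^ 2 := by
    simpa using hasStrongType_tensorConv (fun _ => by norm_num) hkernel (cellAverage A g)
  have hsq : ∀ y, l ≤ |T y| ↔ l ^ 2 ≤ T y ^ 2 := fun y => by
    rw [sq_le_sq, abs_of_pos hl]
  simp only [mixedLogMean_eq_tensorConv B hg fun j => (hA j).le]
  rw [cubeMeasure_real_setOf_digits fun y => l ≤ |T y|]
  simp only [hsq]
  calc _ ≤ (l ^ 2)⁻¹ * 𝔼 y, T y ^ 2 :=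
        expect_ite_le_inv_mul_expect (fun _ => sq_nonneg _) (by positivity)
    _ ≤ (l ^ 2)⁻¹ * ((12 ^ d) ^ 2 * ∫ x, g x ^ 2 ∂cubeMeasure d) := by
        gcongr
        exact hstrong.trans (by gcongr; exact expect_cellAverage_sq_le hg hg2)

end Bounds

/-! ### Convergence on dyadic step functions -/

section StepFunctions

variable {A d : ℕ}

lemma walshProd_mulSingle {a j : ℕ} (ha : a < A) (hj : j < 2 ^ A) :
    walshProd j (signs (Pi.mulSingle ⟨a, ha⟩ (-1) : DyadicGroup A)) =
      if j.testBit a then -1 else 1 := by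
  rw [walshProd_eq_prod_range hj, prod_eq_single_of_mem a (mem_range.2 ha) fun k _ hk => by
    rw [signs_mulSingle_of_ne ha hk, ite_self], signs_mulSingle_of_eq]

lemma exists_testBit_ne {i j : ℕ} (hi : i < 2 ^ A) (hj : j < 2 ^ A) (hij : i ≠ j) :
    ∃ a < A, i.testBit a ≠ j.testBit a := by
  by_contra! h
  refine hij (Nat.eq_of_testBit_eq fun a => ?_)
  rcases lt_or_ge a A with ha | ha
  · exact h a ha
  · have hpow : 2 ^ A ≤ 2 ^ a := Nat.pow_le_pow_right two_pos ha
    rw [Nat.testBit_lt_two_pow (hi.trans_le hpow), Nat.testBit_lt_two_pow (hj.trans_le hpow)]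

lemma expect_walshProd_mul_walshProd {i j : ℕ} (hi : i < 2 ^ A) (hj : j < 2 ^ A) :
    𝔼 t : DyadicGroup A, walshProd i (signs t) * walshProd j (signs t) =
      if i = j then 1 else 0 := by
  split_ifs with hij
  · subst hij
    simp only [(isSignSeq_signs _).walshProd i, Fintype.expect_const]
  · obtain ⟨a, ha, hbit⟩ := exists_testBit_ne hi hj hij
    have hflip := expect_mul_left (Pi.mulSingle ⟨a, ha⟩ (-1) : DyadicGroup A)
      fun t => walshProd i (signs t) * walshProd j (signs t)
    have hodd : ∀ t : DyadicGroup A,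
        walshProd i (signs (Pi.mulSingle ⟨a, ha⟩ (-1) * t)) *
          walshProd j (signs (Pi.mulSingle ⟨a, ha⟩ (-1) * t)) =
        -(walshProd i (signs t) * walshProd j (signs t)) := fun t => by
      rw [signs_mul, walshProd_mul, walshProd_mul, walshProd_mulSingle ha hi,
        walshProd_mulSingle ha hj]
      cases hia : i.testBit a <;> cases hja : j.testBit a <;> simp_all
    simp only [hodd, expect_neg_distrib] at hflip
    linarith

lemma conv_dirichletSum_walshProd {N j : ℕ} (hN : N ≤ 2 ^ A) (hj : j < 2 ^ A)
    (x : DyadicGroup A) :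
    conv (dirichletSum N) (fun t => walshProd j (signs t)) x =
      (if j < N then 1 else 0) * walshProd j (signs x) := by
  have hterm : ∀ i ∈ range N,
      𝔼 t : DyadicGroup A, walshProd i (signs x) * walshProd i (signs t) * walshProd j (signs t) =
        if i = j then walshProd i (signs x) else 0 := fun i hi => by
    simp only [mul_assoc, ← mul_expect,
      expect_walshProd_mul_walshProd ((mem_range.1 hi).trans_le hN) hj, mul_ite, mul_one, mul_zero]
  simp only [conv, dirichletSum, signs_mul, walshProd_mul, sum_mul, expect_sum_comm]
  rw [sum_congr rfl hterm, sum_ite_eq', ite_mul, one_mul, zero_mul]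
  simp only [mem_range]

/-- The eigenvalue of the convolution with `logKernel n k` at the Walsh function of index `j`. -/
def logEigenvalue (n : ℕ) (k : ℕ → ℕ) (j : ℕ) : ℝ :=
  ∑ i ∈ Ico 1 n, 1 / (logSum n * i) * if j < k i then 1 else 0

lemma conv_logKernel_walshProd {n j : ℕ} {k : ℕ → ℕ} (hk : ∀ i ∈ Ico 1 n, k i ≤ 2 ^ A)
    (hj : j < 2 ^ A) (x : DyadicGroup A) :
    conv (logKernel n k) (fun t => walshProd j (signs t)) x =
      logEigenvalue n k j * walshProd j (signs x) := by
  unfold logKernel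
  rw [conv_sum, logEigenvalue, sum_mul]
  refine sum_congr rfl fun i hi => ?_
  rw [conv_const_mul, conv_dirichletSum_walshProd (hk i hi) hj, mul_assoc]

lemma one_sub_logEigenvalue_mem_Icc {n j : ℕ} (hn : 2 ≤ n) {k : ℕ → ℕ}
    (hk : #{i ∈ Ico 1 n | k i ≤ j} ≤ j) :
    1 - logEigenvalue n k j ∈ Set.Icc 0 (j / logSum n) := by
  have hlog := logSum_pos hn
  have heq : 1 - logEigenvalue n k j = ∑ i ∈ Ico 1 n with k i ≤ j, 1 / (logSum n * i) := by
    rw [logEigenvalue, sub_eq_iff_eq_add, sum_filter, ← sum_add_distrib]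
    refine (sum_logWeight hn).symm.trans (sum_congr rfl fun i _ => ?_)
    split_ifs <;> first | omega | ring
  rw [heq]
  refine ⟨sum_nonneg fun i _ => by positivity, ?_⟩
  calc ∑ i ∈ Ico 1 n with k i ≤ j, 1 / (logSum n * i)
      ≤ ∑ i ∈ Ico 1 n with k i ≤ j, 1 / logSum n := by
        refine sum_le_sum fun i hi => one_div_le_one_div_of_le hlog ?_
        exact le_mul_of_one_le_right hlog.le (mod_cast (mem_Ico.1 (mem_filter.1 hi).1).1)
    _ = #{i ∈ Ico 1 n | k i ≤ j} * (1 / logSum n) := by rw [sum_const, nsmul_eq_mul]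
    _ ≤ j * (1 / logSum n) := by gcongr
    _ = j / logSum n := mul_one_div ..

lemma card_filter_Ico_le (n j : ℕ) (b : Prop) [Decidable b] :
    #{i ∈ Ico 1 n | (if b then n - i else i) ≤ j} ≤ j := by
  split_ifs
  · calc _ ≤ #(Ico (n - j) n) := card_le_card fun i => by
          simp only [mem_filter, mem_Ico]; omega
      _ ≤ j := by rw [Nat.card_Ico]; omega
  · calc _ ≤ #(Ioc 0 j) := card_le_card fun i => by
          simp only [mem_filter, mem_Ico, mem_Ioc]; omega
      _ = j := by rw [Nat.card_Ioc, Nat.sub_zero]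

lemma tendsto_logEigenvalue (b : Prop) [Decidable b] (j : ℕ) :
    Tendsto (fun n => logEigenvalue n (fun i => if b then n - i else i) j) atTop (nhds 1) := by
  have hdefect : Tendsto (fun n => 1 - logEigenvalue n (fun i => if b then n - i else i) j) atTop
      (nhds 0) := by
    refine squeeze_zero' ?_ ?_ (tendsto_const_nhds.div_atTop tendsto_logSum_atTop (a := (j : ℝ)))
    all_goals filter_upwards [eventually_ge_atTop 2] with n hn
    exacts [(one_sub_logEigenvalue_mem_Icc hn (card_filter_Ico_le n j b)).1,
      (one_sub_logEigenvalue_mem_Icc hn (card_filter_Ico_le n j b)).2]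
  simpa using hdefect.const_sub 1

/-- The Walsh–Fourier coefficient of a function on the cells of generation `A`. -/
def stepCoef (G : (Fin d → DyadicGroup A) → ℝ) (j : Fin d → ℕ) : ℝ :=
  𝔼 t, (∏ i, walshProd (j i) (signs (t i))) * G t

lemma eq_sum_stepCoef_mul (G : (Fin d → DyadicGroup A) → ℝ) (y : Fin d → DyadicGroup A) :
    G y = ∑ j ∈ Fintype.piFinset fun _ => range (2 ^ A),
      stepCoef G j * ∏ i, walshProd (j i) (signs (y i)) := by
  conv_lhs => rw [← tensorConv_dirichletSum_two_pow G y]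
  simp only [tensorConv, dirichletSum, prod_univ_sum, sum_mul, expect_sum_comm, stepCoef,
    expect_mul, signs_mul, walshProd_mul, prod_mul_distrib]
  exact sum_congr rfl fun j _ => expect_congr rfl fun t _ => by ring

lemma mixedLogMean_comp_digits (B : Finset (Fin d)) (G : (Fin d → DyadicGroup A) → ℝ)
    (n : Fin d → ℕ) (x : Fin d → ℝ) :
    mixedLogMean B (fun x => G (digits A x)) n x =
      ∑ j ∈ Fintype.piFinset fun _ => range (2 ^ A), stepCoef G j *
        ∏ i, logEigenvalue (n i) (fun k => if i ∈ B then n i - k else k) (j i) *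
          walshProd (j i) (signs (digits A x i)) := by
  obtain ⟨A', hA', hn⟩ := exists_ge_forall_lt_two_pow n A
  have hpow : 2 ^ A ≤ 2 ^ A' := Nat.pow_le_pow_right two_pos hA'
  have hlt : ∀ j ∈ Fintype.piFinset fun _ : Fin d => range (2 ^ A), ∀ i, j i < 2 ^ A :=
    fun j hj i => mem_range.1 (Fintype.mem_piFinset.1 hj i)
  have hrefine : ∀ j ∈ Fintype.piFinset fun _ : Fin d => range (2 ^ A), ∀ x i,
      walshProd (j i) (signs (digits A x i)) = walshProd (j i) (signs (digits A' x i)) :=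
    fun j hj x i => by
      rw [digits, digits, ← walsh_eq_walshProd_realDigits (hlt j hj i),
        ← walsh_eq_walshProd_realDigits ((hlt j hj i).trans_le hpow)]
  have hstep : (fun x => G (digits A x)) = fun x =>
      ∑ j ∈ Fintype.piFinset fun _ => range (2 ^ A),
        stepCoef G j * ∏ i, walshProd (j i) (signs (digits A' x i)) := by
    ext x
    rw [eq_sum_stepCoef_mul G]
    exact sum_congr rfl fun j hj => by simp only [hrefine j hj]
  rw [mixedLogMean_eq_tensorConv B (integrable_comp_digits G) (fun i => (hn i).le), hstep,
    cellAverage_comp_digits fun y => ∑ j ∈ Fintype.piFinset fun _ => range (2 ^ A),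
        stepCoef G j * ∏ i, walshProd (j i) (signs (y i)), tensorConv_sum]
  refine sum_congr rfl fun j hj => ?_
  simp only [tensorConv_prod (meanKernel B n) fun i t => walshProd (j i) (signs t), hrefine j hj]
  congr 1
  refine prod_congr rfl fun i _ =>
    conv_logKernel_walshProd (fun k hk => ?_) ((hlt j hj i).trans_le hpow) _
  have hk := mem_Ico.1 hk
  have := hn i
  split_ifs <;> omega

lemma tendsto_eval_atTop (i : Fin d) : Tendsto (fun n : Fin d → ℕ => n i) atTop atTop :=
  (Function.monotone_eval i).tendsto_atTop_atTop fun N => ⟨fun _ => N, le_rfl⟩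

theorem eventually_mixedLogMean_comp_digits (B : Finset (Fin d)) (G : (Fin d → DyadicGroup A) → ℝ)
    {η : ℝ} (hη : 0 < η) :
    ∀ᶠ n in atTop, ∀ x, |mixedLogMean B (fun x => G (digits A x)) n x - G (digits A x)| < η := by
  have hlim : ∀ y : Fin d → DyadicGroup A, Tendsto (fun n : Fin d → ℕ =>
      ∑ j ∈ Fintype.piFinset fun _ => range (2 ^ A), stepCoef G j *
        ∏ i, logEigenvalue (n i) (fun k => if i ∈ B then n i - k else k) (j i) *
          walshProd (j i) (signs (y i))) atTop (nhds (G y)) := fun y => by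
    rw [eq_sum_stepCoef_mul G y]
    refine tendsto_finsetSum _ fun j _ => (tendsto_finsetProd _ fun i _ => ?_).const_mul _
    simpa using ((tendsto_logEigenvalue (i ∈ B) (j i)).comp (tendsto_eval_atTop i)).mul_const
      (walshProd (j i) (signs (y i)))
  filter_upwards [eventually_all.2 fun y => (hlim y).eventually (Metric.ball_mem_nhds _ hη)]
    with n hn x
  rw [mixedLogMean_comp_digits, ← Real.dist_eq]
  exact hn (digits A x)

end StepFunctions

/-! ### Approximation by step functions -/

section Approximation

variable {d : ℕ}

lemma exists_abs_sub_comp_digits_lt {c : (Fin d → ℝ) → ℝ} (hc : UniformContinuous c) {η : ℝ}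
    (hη : 0 < η) :
    ∃ (A : ℕ) (G : (Fin d → DyadicGroup A) → ℝ), ∀ x ∈ unitCube d,
      |c x - G (digits A x)| < η := by
  classical
  obtain ⟨ρ, hρ, hclose⟩ := Metric.uniformContinuous_iff.1 hc η hη
  obtain ⟨A, hA⟩ := exists_pow_lt_of_lt_one hρ (one_half_lt_one (α := ℝ))
  rw [one_div, inv_pow] at hA
  let G : (Fin d → DyadicGroup A) → ℝ := fun y =>
    if h : ∃ x ∈ unitCube d, digits A x = y then c h.choose else 0
  refine ⟨A, G, fun x hx => ?_⟩
  have hcell : ∃ z ∈ unitCube d, digits A z = digits A x := ⟨x, hx, rfl⟩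
  obtain ⟨hz, hzx⟩ := hcell.choose_spec
  rw [show G (digits A x) = c hcell.choose from dif_pos hcell, ← Real.dist_eq]
  exact hclose ((dist_le_of_digits_eq hx hz hzx.symm).trans_lt hA)

lemma exists_integral_sub_comp_digits_sq_le {g : (Fin d → ℝ) → ℝ}
    (hg : MemLp g 2 (cubeMeasure d)) {η : ℝ} (hη : 0 < η) :
    ∃ (A : ℕ) (G : (Fin d → DyadicGroup A) → ℝ),
      ∫ x, (g x - G (digits A x)) ^ 2 ∂cubeMeasure d ≤ η := by
  have : (cubeMeasure d).Regular := by unfold cubeMeasure; infer_instance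
  obtain ⟨c, hcompact, hgc, hc, hcLp⟩ :=
    MemLp.exists_hasCompactSupport_integral_rpow_sub_le (p := 2) two_pos
      (by simpa using hg) (show 0 < η / 4 by positivity)
  simp only [Real.rpow_two, Real.norm_eq_abs, sq_abs] at hgc
  obtain ⟨A, G, hG⟩ := exists_abs_sub_comp_digits_lt
    (hcompact.uniformContinuous_of_continuous hc) (show 0 < √(η / 4) by positivity)
  have hcube : ∀ᵐ x ∂cubeMeasure d, x ∈ unitCube d :=
    ae_restrict_mem (.univ_pi fun _ => measurableSet_Ico)
  have hgc_sq : Integrable (fun x => (g x - c x) ^ 2) (cubeMeasure d) :=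
    (hg.sub (by simpa using hcLp)).integrable_sq
  refine ⟨A, G, ?_⟩
  calc ∫ x, (g x - G (digits A x)) ^ 2 ∂cubeMeasure d
      ≤ ∫ x, (2 * (g x - c x) ^ 2 + 2 * (η / 4)) ∂cubeMeasure d := by
        refine integral_mono_of_nonneg (.of_forall fun _ => sq_nonneg _)
          ((hgc_sq.const_mul 2).add (integrable_const _)) ?_
        filter_upwards [hcube] with x hx
        have hcG : (c x - G (digits A x)) ^ 2 ≤ η / 4 := by
          rw [← sq_abs, ← Real.le_sqrt (abs_nonneg _) (by positivity)]
          exact (hG x hx).le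
        linarith [add_sq_le (a := g x - c x) (b := c x - G (digits A x))]
    _ = 2 * ∫ x, (g x - c x) ^ 2 ∂cubeMeasure d + 2 * (η / 4) := by
        rw [integral_add (hgc_sq.const_mul 2) (integrable_const _), integral_const_mul,
          integral_const, probReal_univ, one_smul]
    _ ≤ η := by linarith

end Approximation

/-! ### Reduction to step functions -/

section Reduction

variable {d : ℕ} {B : Finset (Fin d)} {f : (Fin d → ℝ) → ℝ}

/-- Outside sets of measure `η` (depending on `n`), the function `e` and its mixed logarithmic means
are smaller than `l`. -/
def HasSmallMeans (B : Finset (Fin d)) (l η : ℝ) (e : (Fin d → ℝ) → ℝ) : Prop :=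
  (cubeMeasure d).real {x | l ≤ |e x|} ≤ η ∧ ∀ n : Fin d → ℕ, (∀ j, 2 ≤ n j) →
    (cubeMeasure d).real {x | l ≤ |mixedLogMean B e n x|} ≤ η

lemma measureReal_add_le_abs_add_le {α : Type*} [MeasurableSpace α] (μ : Measure α)
    [IsFiniteMeasure μ] (u v : α → ℝ) (a b : ℝ) :
    μ.real {x | a + b ≤ |u x + v x|} ≤ μ.real {x | a ≤ |u x|} + μ.real {x | b ≤ |v x|} := by
  refine (measureReal_mono fun x hx => ?_).trans (measureReal_union_le _ _)
  by_contra! h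
  simp only [Set.mem_union, Set.mem_ofPred_eq, not_or, not_le] at h hx
  linarith [abs_add_le (u x) (v x)]

lemma HasSmallMeans.add {a b η θ : ℝ} {u v : (Fin d → ℝ) → ℝ} (hu : HasSmallMeans B a η u)
    (hv : HasSmallMeans B b θ v) (hui : Integrable u (cubeMeasure d))
    (hvi : Integrable v (cubeMeasure d)) : HasSmallMeans B (a + b) (η + θ) (u + v) := by
  refine ⟨(measureReal_add_le_abs_add_le _ u v a b).trans (add_le_add hu.1 hv.1), fun n hn => ?_⟩
  simp only [mixedLogMean_add B hui hvi]
  exact (measureReal_add_le_abs_add_le _ _ _ a b).trans (add_le_add (hu.2 n hn) (hv.2 n hn))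

lemma eventually_cubeMeasure_highPart_le (hf : Measurable f) (hfi : Integrable f (cubeMeasure d))
    {l η : ℝ} (hl : 0 < l) (hη : 0 < η) :
    ∀ᶠ M : ℕ in atTop, (cubeMeasure d).real {x | l ≤ |highPart M f x|} ≤ η := by
  filter_upwards [(tendsto_setIntegral_lt_abs hf hfi.abs).eventually
    (ge_mem_nhds (mul_pos hl hη))] with M hM
  have hmarkov := mul_meas_ge_le_integral_of_nonneg (.of_forall fun _ => abs_nonneg _)
    (integrable_highPart hf hfi M).abs l
  have htail : ∫ x, |highPart M f x| ∂cubeMeasure d =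
      ∫ x in {x | (M : ℝ) < |f x|}, |f x| ∂cubeMeasure d := by
    rw [← integral_indicator (measurableSet_lt_abs hf M)]
    exact integral_congr_ae (.of_forall (norm_indicator_eq_indicator_norm f))
  exact le_of_mul_le_mul_left (hmarkov.trans (htail.trans_le hM)) hl

lemma memLp_two_sub_highPart (hf : Measurable f) (M : ℕ) :
    MemLp (f - highPart M f) 2 (cubeMeasure d) := by
  refine .of_bound (hf.sub (hf.indicator (measurableSet_lt_abs hf M))).aestronglyMeasurable M
    (.of_forall fun x => ?_)
  by_cases hx : (M : ℝ) < |f x| <;> simp_all [highPart]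

lemma eventually_hasSmallMeans_highPart (hB : B.Nonempty) (hf : Measurable f)
    (hfi : Integrable f (cubeMeasure d))
    (hfl : Integrable (fun x => |f x| * Real.log (1 + |f x|) ^ (#B - 1)) (cubeMeasure d))
    {l η : ℝ} (hl : 0 < l) (hη : 0 < η) :
    ∀ᶠ M : ℕ in atTop, HasSmallMeans B l η (highPart M f) :=
  (eventually_cubeMeasure_highPart_le hf hfi hl hη).and
    (eventually_mixedLogMean_highPart_le hB hf hfi hfl hl hη)

lemma hasSmallMeans_of_integral_sq_le {e : (Fin d → ℝ) → ℝ} (hei : Integrable e (cubeMeasure d))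
    (he2 : Integrable (fun x => e x ^ 2) (cubeMeasure d)) {l η : ℝ} (hl : 0 < l)
    (he : (12 ^ d) ^ 2 * ∫ x, e x ^ 2 ∂cubeMeasure d ≤ l ^ 2 * η) : HasSmallMeans B l η e := by
  refine ⟨?_, fun n hn => (cubeMeasure_le_abs_mixedLogMean_le B hei he2 hn hl).trans ?_⟩
  · have hmarkov := mul_meas_ge_le_integral_of_nonneg (.of_forall fun _ => sq_nonneg _) he2 (l ^ 2)
    have hle : ∫ x, e x ^ 2 ∂cubeMeasure d ≤ (12 ^ d) ^ 2 * ∫ x, e x ^ 2 ∂cubeMeasure d :=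
      le_mul_of_one_le_left (integral_nonneg fun _ => sq_nonneg _)
        (one_le_pow₀ (one_le_pow₀ (by norm_num)))
    simp only [sq_le_sq, abs_of_pos hl] at hmarkov
    exact le_of_mul_le_mul_left (hmarkov.trans (hle.trans he)) (by positivity)
  · exact (inv_mul_le_iff₀ (by positivity)).2 he

lemma exists_hasSmallMeans_sub_step_of_memLp_two (B : Finset (Fin d)) {g : (Fin d → ℝ) → ℝ}
    (hg : MemLp g 2 (cubeMeasure d)) {l η : ℝ} (hl : 0 < l) (hη : 0 < η) :
    ∃ (A : ℕ) (G : (Fin d → DyadicGroup A) → ℝ), HasSmallMeans B l η (g - G ∘ digits A) := by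
  obtain ⟨A, G, hG⟩ := exists_integral_sub_comp_digits_sq_le hg
    (show 0 < l ^ 2 * η / (12 ^ d) ^ 2 by positivity)
  rw [le_div_iff₀' (by positivity)] at hG
  have hGi : Integrable (G ∘ digits A) (cubeMeasure d) := integrable_comp_digits G
  have hG2 : MemLp (G ∘ digits A) 2 (cubeMeasure d) :=
    (memLp_two_iff_integrable_sq hGi.1).2 (integrable_comp_digits fun y => G y ^ 2)
  exact ⟨A, G, hasSmallMeans_of_integral_sq_le ((hg.integrable one_le_two).sub hGi)
    (hg.sub hG2).integrable_sq hl hG⟩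

theorem exists_hasSmallMeans_sub_step (hB : B.Nonempty) (hf : Measurable f)
    (hfi : Integrable f (cubeMeasure d))
    (hfl : Integrable (fun x => |f x| * Real.log (1 + |f x|) ^ (#B - 1)) (cubeMeasure d))
    {l η : ℝ} (hl : 0 < l) (hη : 0 < η) :
    ∃ (A : ℕ) (G : (Fin d → DyadicGroup A) → ℝ), HasSmallMeans B l η (f - G ∘ digits A) := by
  obtain ⟨M, hM⟩ :=
    (eventually_hasSmallMeans_highPart hB hf hfi hfl (half_pos hl) (half_pos hη)).exists
  have hlow := memLp_two_sub_highPart hf M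
  obtain ⟨A, G, hG⟩ :=
    exists_hasSmallMeans_sub_step_of_memLp_two B hlow (half_pos hl) (half_pos hη)
  refine ⟨A, G, ?_⟩
  convert hM.add hG (integrable_highPart hf hfi M)
    ((hlow.integrable one_le_two).sub (integrable_comp_digits G)) using 1
  all_goals first | rw [add_halves] | abel

lemma cubeMeasure_lt_abs_mixedLogMean_sub_le {A : ℕ} {G : (Fin d → DyadicGroup A) → ℝ}
    (hfi : Integrable f (cubeMeasure d)) {a b η : ℝ}
    (hG : HasSmallMeans B a η (f - G ∘ digits A)) {n : Fin d → ℕ} (hn : ∀ j, 2 ≤ n j)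
    (hconv : ∀ x, |mixedLogMean B (G ∘ digits A) n x - G (digits A x)| < b) :
    (cubeMeasure d).real {x | a + a + b < |mixedLogMean B f n x - f x|} ≤ η + η := by
  refine (measureReal_mono fun x hx => ?_).trans
    ((measureReal_union_le _ _).trans (add_le_add (hG.2 n hn) hG.1))
  have hGi : Integrable (G ∘ digits A) (cubeMeasure d) := integrable_comp_digits G
  have hsplit : mixedLogMean B f n x = mixedLogMean B (f - G ∘ digits A) n x +
      mixedLogMean B (G ∘ digits A) n x := by
    rw [← mixedLogMean_add B (hfi.sub hGi) hGi, sub_add_cancel]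
  by_contra! h
  simp only [Set.mem_union, Set.mem_ofPred_eq, not_or, not_le, hsplit, Pi.sub_apply,
    Function.comp_apply] at h hx
  have hstep := hconv x
  grind

end Reduction

end WalshLogMean

/-- Theorem (measureconv). For `f ∈ L log^{|B|-1} L(I^d)`, the mixed
logarithmic means converge to `f` in measure on `I^d` as `min_j n_j → ∞`. -/
theorem stmt5 (d : ℕ) (hd : 1 ≤ d) (B : Finset (Fin d)) (hB : B.Nonempty)
    (f : (Fin d → ℝ) → ℝ) (hf : Measurable f) (hfi : Integrable f (cubeMeasure d))
    (hfl : Integrable (fun x => |f x| * Real.log (1 + |f x|) ^ (B.card - 1)) (cubeMeasure d)) :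
    ∀ ε > (0:ℝ), ∀ δ > (0:ℝ), ∃ N : ℕ, ∀ n : Fin d → ℕ, (∀ j, 2 ≤ n j) → (∀ j, N ≤ n j) →
      ((cubeMeasure d) {x | ε < |mixedLogMean B f n x - f x|}).toReal < δ := by
  intro ε hε δ hδ
  obtain ⟨A, G, hG⟩ := WalshLogMean.exists_hasSmallMeans_sub_step hB hf hfi hfl
    (show 0 < ε / 3 by positivity) (show 0 < δ / 3 by positivity)
  obtain ⟨N, hN⟩ := eventually_atTop.1
    (WalshLogMean.eventually_mixedLogMean_comp_digits B G (show 0 < ε / 3 by positivity))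
  refine ⟨Finset.univ.sup N, fun n hn hNn => ?_⟩
  have hNle : N ≤ n := fun j => (Finset.le_sup (Finset.mem_univ j)).trans (hNn j)
  have hmeasure := WalshLogMean.cubeMeasure_lt_abs_mixedLogMean_sub_le hfi hG hn (hN n hNle)
  rw [add_thirds] at hmeasure
  exact hmeasure.trans_lt (by linarith)

end
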